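/- The quotient of the Nielsen class Ni(A6, C_{2×2}^6) by the equivalence relation generated by the Hurwitz moves together with simultaneous conjugation of all entries by a single element of the symmetric group S6 has exactly two equivalence classes. -/

import Mathlib

/-- The `i`-th Hurwitz move on `k`-tuples of elements of a group `G`:
`(g₁,…,gₖ) ↦ (g₁,…,g_{i-1}, g_{i+1}, g_{i+1}⁻¹ g_i g_{i+1}, g_{i+2},…,gₖ)`. -/
def HurwitzMove {G : Type*} [Group G] {k : ℕ} (g h : Fin k → G) : Prop :=
  ∃ i : ℕ, ∃ hi : i + 1 < k,
    h ⟨i, Nat.lt_of_succ_lt hi⟩ = g ⟨i + 1, hi⟩ ∧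
    h ⟨i + 1, hi⟩ = (g ⟨i + 1, hi⟩)⁻¹ * g ⟨i, Nat.lt_of_succ_lt hi⟩ * g ⟨i + 1, hi⟩ ∧
    ∀ j : Fin k, (j : ℕ) ≠ i → (j : ℕ) ≠ i + 1 → h j = g j

/-- Hurwitz equivalence: the equivalence relation generated by the Hurwitz moves. -/
def HurwitzEquiv {G : Type*} [Group G] {k : ℕ} (g h : Fin k → G) : Prop :=
  Relation.EqvGen HurwitzMove g h

/-- The Nielsen class `Ni(A₆, C_{2×2}^k)`: `k`-tuples of order-2 elements of `A₆`
(products of two disjoint transpositions) with product `1` generating `A₆`. -/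
def NielsenSet (k : ℕ) : Set (Fin k → Equiv.Perm (Fin 6)) :=
  {g | (∀ i, g i ∈ alternatingGroup (Fin 6)) ∧ (∀ i, orderOf (g i) = 2) ∧
       (List.ofFn g).prod = 1 ∧
       Subgroup.closure (Set.range g) = alternatingGroup (Fin 6)}

/-- One step of the absolute equivalence: a Hurwitz move, or simultaneous
conjugation of all entries by a single element of `S₆`. -/
def AbsRel (k : ℕ) (g h : Fin k → Equiv.Perm (Fin 6)) : Prop :=
  HurwitzMove g h ∨ ∃ s : Equiv.Perm (Fin 6), h = fun i => s⁻¹ * g i * s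

/-- One step of the inner equivalence: a Hurwitz move, or simultaneous
conjugation of all entries by a single element of `A₆`. -/
def InnerRel (k : ℕ) (g h : Fin k → Equiv.Perm (Fin 6)) : Prop :=
  HurwitzMove g h ∨
    ∃ s ∈ alternatingGroup (Fin 6), h = fun i => s⁻¹ * g i * s

/-- The set of fixed points of a permutation. -/
def FixedPts {n : ℕ} (g : Equiv.Perm (Fin n)) : Set (Fin n) := {x | g x = x}

/-!
Two equal neighbours can always be produced: if `w = g₁ g₂ g₃`, the first three entries and the
last three (reversed) are triples with product `w`, and moving each of them within its braid orbit
makes the two middle entries equal, at worst after a change of `w` to an element of order five. A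
pair `x, x` moves past other entries without changing them, so it can be conjugated by each of
them, or replaced inside a dihedral group of order ten. The four entries after `x, x` either
become equal in pairs or are conjugate to one fixed quadruple, and as the entries generate `A₆`,
all possible `x` are then equivalent. This leaves at most two classes.

The classes are separated by the lifting invariant. Each involution of `A₆` has exactly one lift
of order two in the triple cover `3.A₆`, and the product of the lifts of the entries is a central
element that braid moves preserve. Odd elements of `S₆` invert the centre, so it is only the
triviality of the invariant that survives simultaneous conjugation; it is trivial on `x, x, a, a,
b, b`, and nontrivial on the other representative.
-/

namespace HurwitzA6

open Equiv List

set_option maxRecDepth 100000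

/-- The braid move `(a, b) ↦ (b, b⁻¹ a b)` on two adjacent entries of a list; on `List.ofFn` of a
tuple it is a Hurwitz move. -/
inductive BraidStep {G : Type*} [Group G] : List G → List G → Prop
  | swap (u : List G) (a b : G) (v : List G) :
      BraidStep (u ++ a :: b :: v) (u ++ b :: b⁻¹ * a * b :: v)

/-- Braid equivalence of lists: the equivalence relation generated by the braid moves. -/
def BraidEquiv {G : Type*} [Group G] : List G → List G → Prop := Relation.EqvGen BraidStep

section BraidEquiv

variable {G H : Type*} [Group G] [Group H]

namespace BraidEquiv

theorem refl (l : List G) : BraidEquiv l l := Relation.EqvGen.refl l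

theorem symm {l m : List G} (h : BraidEquiv l m) : BraidEquiv m l := Relation.EqvGen.symm _ _ h

theorem trans {l m n : List G} (h : BraidEquiv l m) (h' : BraidEquiv m n) : BraidEquiv l n :=
  Relation.EqvGen.trans _ _ _ h h'

instance : Trans (BraidEquiv (G := G)) BraidEquiv BraidEquiv := ⟨trans⟩

theorem swap (u : List G) (a b : G) (v : List G) :
    BraidEquiv (u ++ a :: b :: v) (u ++ b :: b⁻¹ * a * b :: v) := .rel _ _ (.swap u a b v)

theorem swap_of_eq (u : List G) {a b c : G} (h : b⁻¹ * a * b = c) (v : List G) :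
    BraidEquiv (u ++ a :: b :: v) (u ++ b :: c :: v) := h ▸ swap u a b v

theorem lift {f : List G → List H} (hf : ∀ l m, BraidStep l m → BraidEquiv (f l) (f m))
    {l m : List G} (h : BraidEquiv l m) : BraidEquiv (f l) (f m) := by
  induction h with
  | rel l m h => exact hf l m h
  | refl l => exact refl _
  | symm l m _ ih => exact ih.symm
  | trans l m n _ _ ih ih' => exact ih.trans ih'

theorem iff_of_step {P : List G → Prop} (hP : ∀ l m, BraidStep l m → (P l ↔ P m)) {l m : List G}
    (h : BraidEquiv l m) : P l ↔ P m := by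
  induction h with
  | rel l m h => exact hP l m h
  | refl l => exact Iff.rfl
  | symm l m _ ih => exact ih.symm
  | trans l m n _ _ ih ih' => exact ih.trans ih'

theorem append_left (w : List G) {l m : List G} (h : BraidEquiv l m) :
    BraidEquiv (w ++ l) (w ++ m) :=
  lift (by rintro _ _ ⟨u, a, b, v⟩; simpa using swap (w ++ u) a b v) h

theorem append_right (w : List G) {l m : List G} (h : BraidEquiv l m) :
    BraidEquiv (l ++ w) (m ++ w) :=
  lift (f := (· ++ w)) (by rintro _ _ ⟨u, a, b, v⟩; simpa using swap u a b (v ++ w)) h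

theorem append {l l' m m' : List G} (h : BraidEquiv l l') (h' : BraidEquiv m m') :
    BraidEquiv (l ++ m) (l' ++ m') :=
  (h.append_right m).trans (h'.append_left l')

theorem map (f : G →* H) {l m : List G} (h : BraidEquiv l m) : BraidEquiv (l.map f) (m.map f) :=
  lift (by rintro _ _ ⟨u, a, b, v⟩; simpa using swap (u.map f) (f a) (f b) (v.map f)) h

theorem reverse_inv {l m : List G} (h : BraidEquiv l m) :
    BraidEquiv (l.map (·⁻¹)).reverse (m.map (·⁻¹)).reverse :=
  lift (f := fun l => (l.map (·⁻¹)).reverse) (by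
    rintro _ _ ⟨u, a, b, v⟩
    simpa [mul_assoc] using
      (swap (v.map (·⁻¹)).reverse (b⁻¹ * a⁻¹ * b) b⁻¹ (u.map (·⁻¹)).reverse).symm) h

theorem length_eq {l m : List G} (h : BraidEquiv l m) : l.length = m.length :=
  (iff_of_step (P := fun n => l.length = n.length)
    (by rintro _ _ ⟨u, a, b, v⟩; simp) h).1 rfl

theorem prod_eq {l m : List G} (h : BraidEquiv l m) : l.prod = m.prod :=
  (iff_of_step (P := fun n => l.prod = n.prod)
    (by rintro _ _ ⟨u, a, b, v⟩; simp [mul_assoc]) h).1 rfl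

theorem forall_mem_iff {P : G → Prop} (hP : ∀ a b, P (b⁻¹ * a * b) ↔ P a) {l m : List G}
    (h : BraidEquiv l m) : (∀ x ∈ l, P x) ↔ ∀ x ∈ m, P x :=
  iff_of_step (P := fun l => ∀ x ∈ l, P x) (by
    rintro _ _ ⟨u, a, b, v⟩
    simp only [mem_append, mem_cons, or_imp, forall_and, forall_eq, hP]; tauto) h

theorem closure_eq {l m : List G} (h : BraidEquiv l m) :
    Subgroup.closure {x | x ∈ l} = Subgroup.closure {x | x ∈ m} := by
  refine (iff_of_step (P := fun n => Subgroup.closure {x | x ∈ l} = Subgroup.closure {x | x ∈ n})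
    ?_ h).1 rfl
  rintro _ _ ⟨u, a, b, v⟩
  suffices Subgroup.closure {x | x ∈ u ++ a :: b :: v} =
      Subgroup.closure {x | x ∈ u ++ b :: b⁻¹ * a * b :: v} by rw [this]
  have swap_le (a b : G) (K : Subgroup G) (hb : b ∈ K) : b⁻¹ * a * b ∈ K ↔ a ∈ K := by
    rw [K.mul_mem_cancel_right hb, K.mul_mem_cancel_left (K.inv_mem hb)]
  refine eq_of_forall_ge_iff fun K => ?_
  simp only [Subgroup.closure_le, Set.subset_def, Set.mem_ofPred_eq, SetLike.mem_coe, mem_append,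
    mem_cons, or_imp, forall_and, forall_eq]
  constructor <;> rintro ⟨hu, h, h', hv⟩ <;> simp_all

theorem cons_front (u : List G) (a : G) (v : List G) :
    BraidEquiv (u ++ a :: v) (a :: (u.map (fun x => a⁻¹ * x * a) ++ v)) := by
  induction u with
  | nil => exact refl _
  | cons b u ih =>
    calc BraidEquiv (b :: u ++ a :: v) (b :: a :: (u.map (fun x => a⁻¹ * x * a) ++ v)) :=
        ih.append_left [b]
      BraidEquiv _ (a :: ((b :: u).map (fun x => a⁻¹ * x * a) ++ v)) := swap [] b a _

theorem pair_front {a : G} (ha : a * a = 1) (u v : List G) :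
    BraidEquiv (u ++ a :: a :: v) (a :: a :: (u ++ v)) := by
  have conj_conj (x : G) : a⁻¹ * (a⁻¹ * x * a) * a = x := by
    rw [inv_eq_of_mul_eq_one_left ha]; simp [mul_assoc, ha, ← mul_assoc a a]
  calc BraidEquiv (u ++ a :: a :: v) (a :: (u.map (fun x => a⁻¹ * x * a) ++ a :: v)) :=
        cons_front u a (a :: v)
    BraidEquiv _ (a :: a :: (u ++ v)) := by
      simpa [Function.comp_def, conj_conj] using
        (cons_front (u.map fun x => a⁻¹ * x * a) a v).append_left [a]

theorem pair_replace {a b p : G} (ha : a * a = 1) (hb : b * b = 1)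
    (h : BraidEquiv [a, a, p] [b, b, p]) {v : List G} (hp : p ∈ v) :
    BraidEquiv (a :: a :: v) (b :: b :: v) := by
  obtain ⟨u, w, rfl⟩ := append_of_mem hp
  calc BraidEquiv (a :: a :: (u ++ p :: w)) (u ++ a :: a :: p :: w) :=
        (pair_front ha u (p :: w)).symm
    BraidEquiv _ (u ++ b :: b :: p :: w) := (h.append_right w).append_left u
    BraidEquiv _ (b :: b :: (u ++ p :: w)) := pair_front hb u (p :: w)

theorem pair_conj {a p : G} (ha : a * a = 1) {v : List G} (hp : p ∈ v) :
    BraidEquiv (a :: a :: v) (p⁻¹ * a * p :: p⁻¹ * a * p :: v) := by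
  have hb : p⁻¹ * a * p * (p⁻¹ * a * p) = 1 := by simp [mul_assoc, ← mul_assoc a a, ha]
  refine pair_replace ha hb ?_ hp
  calc BraidEquiv [a, a, p] (p :: [p⁻¹ * a * p, p⁻¹ * a * p]) := cons_front [a, a] p []
    BraidEquiv _ [p⁻¹ * a * p, p⁻¹ * a * p, p] := pair_front hb [p] []

/- The triples of reflections `(x, y, z)` of the pentagon with `x y z = p`, other than `(p, p, p)`,
form one braid orbit; this exhibits a path between two of them. -/
theorem pair_dihedral {a p : G} (ha : a * a = 1) (hp : p * p = 1)
    (h : a * p * a * p * a = p * a * p * a * p) {v : List G} (hv : p ∈ v) :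
    BraidEquiv (a :: a :: v) (a⁻¹ * p * a :: a⁻¹ * p * a :: v) := by
  have ha' : a⁻¹ = a := inv_eq_of_mul_eq_one_left ha
  have hp' : p⁻¹ = p := inv_eq_of_mul_eq_one_left hp
  have ha_mul (x : G) : a * (a * x) = x := by rw [← mul_assoc, ha, one_mul]
  have hp_mul (x : G) : p * (p * x) = x := by rw [← mul_assoc, hp, one_mul]
  have pap_conj : p * a * p * a * (p * a * p) = a * p * a := by
    calc p * a * p * a * (p * a * p) = p * a * p * a * p * (a * p) := by simp only [mul_assoc]
      _ = a * p * a := by rw [← h]; simp only [mul_assoc, ha_mul, hp, mul_one]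
  have apa_conj : a * p * a * (p * a * p) * (a * p * a) = p := by
    calc a * p * a * (p * a * p) * (a * p * a) = a * p * a * p * a * (p * a * p * a) := by
          simp only [mul_assoc]
      _ = p := by rw [h]; simp only [mul_assoc, hp_mul, ha_mul, ha, mul_one]
  rw [ha']
  refine pair_replace ha (by simp only [mul_assoc, ha, ha_mul, hp_mul]) ?_ hv
  calc BraidEquiv [a, a, p] [a, p, p * a * p] := swap_of_eq [a] (by rw [hp']) []
    BraidEquiv _ [a * p * a, a, p * a * p] :=
        (swap_of_eq [] (by simp only [ha', mul_assoc, ha, ha_mul, mul_one]) _).symm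
    BraidEquiv _ [a * p * a, p * a * p, a * p * a] :=
        swap_of_eq [a * p * a] (by simpa only [mul_inv_rev, ha', hp', mul_assoc] using pap_conj) []
    BraidEquiv _ [a * p * a, a * p * a, p] :=
        swap_of_eq [a * p * a] (by simpa only [mul_inv_rev, ha', hp', mul_assoc] using apa_conj) []

end BraidEquiv

theorem braidStep_ofFn_iff {k : ℕ} {g h : Fin k → G} :
    BraidStep (ofFn g) (ofFn h) ↔ HurwitzMove g h := by
  constructor
  · have apply_eq (f : Fin k → G) (j : Fin k) : f j = (ofFn f)[(j : ℕ)]'(by simp) := by simp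
    generalize hl : ofFn g = l, hm : ofFn h = m
    rintro ⟨u, a, b, v⟩
    have hk : u.length + (v.length + 2) = k := by simpa using (congrArg length hl).symm
    refine ⟨u.length, by omega, ?_, ?_, fun j hj hj' => ?_⟩
    · simp [apply_eq g, apply_eq h, hl, hm]
    · simp [apply_eq g, apply_eq h, hl, hm]
    · simp only [apply_eq g, apply_eq h, hl, hm, getElem_append, getElem_cons]
      grind
  · rintro ⟨i, hi, h₁, h₂, h₃⟩
    have ofFn_eq (f : Fin k → G) : ofFn f = (ofFn f).take i ++ f ⟨i, Nat.lt_of_succ_lt hi⟩ ::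
        f ⟨i + 1, hi⟩ :: (ofFn f).drop (i + 2) := by
      conv_lhs => rw [← take_append_drop i (ofFn f)]
      rw [drop_eq_getElem_cons (by simp; omega), drop_eq_getElem_cons (by simp; omega)]
      simp
    have take_eq : (ofFn h).take i = (ofFn g).take i := by
      refine ext_getElem (by simp) fun j hj _ => ?_
      have : j < i := by simp at hj; omega
      simpa using h₃ _ (by simp; omega) (by simp; omega)
    have drop_eq : (ofFn h).drop (i + 2) = (ofFn g).drop (i + 2) := by
      refine ext_getElem (by simp) fun j hj _ => ?_
      simpa using h₃ _ (by simp; omega) (by simp; omega)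
    rw [ofFn_eq g, ofFn_eq h, h₁, h₂, take_eq, drop_eq]
    exact .swap _ _ _ _

/-- Two lists are absolutely equivalent if some simultaneous conjugate of the first is braid
equivalent to the second. -/
def AbsEquiv (l m : List G) : Prop := ∃ s : G, BraidEquiv (l.map (MulAut.conj s)) m

namespace AbsEquiv

theorem map_conj (l : List G) (s : G) : AbsEquiv l (l.map (MulAut.conj s)) := ⟨s, .refl _⟩

theorem of_braidEquiv {l m : List G} (h : BraidEquiv l m) : AbsEquiv l m :=
  ⟨1, by simpa using h⟩

theorem refl (l : List G) : AbsEquiv l l := of_braidEquiv (.refl l)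

theorem trans {l m n : List G} : AbsEquiv l m → AbsEquiv m n → AbsEquiv l n := by
  rintro ⟨s, hs⟩ ⟨t, ht⟩
  exact ⟨t * s, by simpa [Function.comp_def] using (hs.map (MulAut.conj t).toMonoidHom).trans ht⟩

theorem symm {l m : List G} : AbsEquiv l m → AbsEquiv m l := by
  rintro ⟨s, hs⟩
  exact ⟨s⁻¹, by
    simpa [Function.comp_def, mul_assoc] using (hs.map (MulAut.conj s⁻¹).toMonoidHom).symm⟩

instance : Trans (AbsEquiv (G := G)) AbsEquiv AbsEquiv := ⟨trans⟩

end AbsEquiv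

theorem eqvGen_absRel_iff {k : ℕ} {g h : Fin k → Perm (Fin 6)} :
    Relation.EqvGen (AbsRel k) g h ↔ AbsEquiv (ofFn g) (ofFn h) := by
  constructor
  · intro e
    induction e with
    | rel g h e =>
      rcases e with e | ⟨s, rfl⟩
      · exact .of_braidEquiv (.rel _ _ (braidStep_ofFn_iff.2 e))
      · exact ⟨s⁻¹, by simpa [map_ofFn, Function.comp_def] using .refl _⟩
    | refl g => exact .refl _
    | symm g h _ ih => exact ih.symm
    | trans f g h _ _ ih ih' => exact ih.trans ih'
  · have of_braidEquiv {l m : List (Perm (Fin 6))} (e : BraidEquiv l m) :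
        ∀ g h, ofFn g = l → ofFn h = m → Relation.EqvGen (AbsRel k) g h := by
      induction e with
      | rel l m e => rintro g h rfl rfl; exact .rel _ _ (.inl (braidStep_ofFn_iff.1 e))
      | refl l => rintro g h rfl e; rw [ofFn_injective e]; exact .refl _
      | symm l m _ ih => exact fun g h hg hh => (ih h g hh hg).symm
      | trans l m n e _ ih ih' =>
        rintro g h rfl hh
        obtain rfl : m.length = k := by simpa using (BraidEquiv.length_eq e).symm
        exact (ih g m.get rfl (ofFn_get m)).trans _ _ _ (ih' m.get h (ofFn_get m) hh)
    rintro ⟨s, e⟩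
    have conj : AbsRel k g fun i => s * g i * s⁻¹ := .inr ⟨s⁻¹, by simp⟩
    exact (Relation.EqvGen.rel _ _ conj).trans _ _ _
      (of_braidEquiv e _ _ (by simp [map_ofFn, Function.comp_def]) rfl)

end BraidEquiv

section Involutions

/-- The elements of order two of `A₆`, that is, of the class `C_{2×2}`. -/
def IsInvolution (g : Perm (Fin 6)) : Prop := g ∈ alternatingGroup (Fin 6) ∧ orderOf g = 2

theorem isInvolution_iff_cycleType {g : Perm (Fin 6)} : IsInvolution g ↔ g.cycleType = {2, 2} := by
  constructor
  · rintro ⟨hg, h2⟩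
    obtain ⟨n, hn⟩ := Perm.cycleType_prime_order (h2 ▸ Nat.prime_two)
    have hsum := g.sum_cycleType.trans_le g.support.card_le_univ
    have hsign := Perm.sign_of_cycleType g
    rw [Perm.mem_alternatingGroup.1 hg] at hsign
    simp only [hn, h2, Multiset.sum_replicate, Multiset.card_replicate, Fintype.card_fin]
      at hsum hsign ⊢
    have : n < 3 := by simp at hsum; omega
    interval_cases n <;> first | rfl | exact absurd hsign (by decide)
  · intro hg
    exact ⟨Perm.cycleType_eq_two_two_subset_alternatingGroup hg, by
      rw [← Perm.lcm_cycleType, hg]; rfl⟩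

theorem cycleType_of_sq_ne_one {w : Perm (Fin 6)} (hw : w ∈ alternatingGroup (Fin 6))
    (h : w ^ 2 ≠ 1) :
    w.cycleType = {3} ∨ w.cycleType = {3, 3} ∨ w.cycleType = {4, 2} ∨ w.cycleType = {5} := by
  have hsum : w.cycleType.sum ≤ 6 := w.sum_cycleType.trans_le w.support.card_le_univ
  have hsign := Perm.sign_of_cycleType w
  rw [Perm.mem_alternatingGroup.1 hw] at hsign
  have two_le (n : ℕ) (hn : n ∈ w.cycleType) : 2 ≤ n := Perm.two_le_of_mem_cycleType hn
  rw [Ne, Perm.pow_prime_eq_one_iff] at h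
  push Not at h
  obtain ⟨k, hk, hk2⟩ := h
  obtain ⟨s, hs⟩ := Multiset.exists_cons_of_mem hk
  rw [hs] at hsum hsign two_le ⊢
  simp only [Multiset.sum_cons, Multiset.card_cons, Multiset.forall_mem_cons] at hsum hsign two_le
  have k_gt : 2 < k := by omega
  rcases s.empty_or_exists_mem with rfl | ⟨m, hm⟩
  · have : k < 7 := by simpa [Nat.lt_succ_iff] using hsum
    interval_cases k <;> revert hsign <;> decide
  · obtain ⟨r, rfl⟩ := Multiset.exists_cons_of_mem hm
    simp only [Multiset.sum_cons, Multiset.card_cons, Multiset.forall_mem_cons] at hsum hsign two_le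
    obtain rfl : r = 0 := Multiset.eq_zero_of_forall_notMem fun n hn => by
      have := Multiset.single_le_sum (fun _ _ => Nat.zero_le _) n hn
      have := two_le.2.2 n hn
      omega
    have : k < 5 := by omega
    have : m < 4 := by omega
    have := two_le.2.1
    interval_cases k <;> interval_cases m <;> revert hsign <;> decide

namespace IsInvolution

theorem mul_self {g : Perm (Fin 6)} (hg : IsInvolution g) : g * g = 1 := by
  rw [← sq, ← hg.2, pow_orderOf_eq_one]

theorem inv_eq {g : Perm (Fin 6)} (hg : IsInvolution g) : g⁻¹ = g :=
  inv_eq_of_mul_eq_one_left hg.mul_self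

theorem conj_iff {g : Perm (Fin 6)} (s : Perm (Fin 6)) :
    IsInvolution (MulAut.conj s g) ↔ IsInvolution g := by
  simp only [isInvolution_iff_cycleType, MulAut.conj_apply, Perm.cycleType_conj]

theorem inv_mul_mul_iff {g s : Perm (Fin 6)} : IsInvolution (s⁻¹ * g * s) ↔ IsInvolution g := by
  simpa using conj_iff (g := g) s⁻¹

theorem exists_conj_eq {a b : Perm (Fin 6)} (ha : IsInvolution a) (hb : IsInvolution b) :
    ∃ s ∈ alternatingGroup (Fin 6), MulAut.conj s a = b := by
  have card_support : a.support.card + 2 ≤ Fintype.card (Fin 6) := by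
    rw [← a.sum_cycleType, isInvolution_iff_cycleType.1 ha]; decide
  obtain ⟨s, hs⟩ := isConj_iff.1 (alternatingGroup.isConj_of (σ := ⟨a, ha.1⟩) (τ := ⟨b, hb.1⟩)
    (Perm.isConj_iff_cycleType_eq.2 (by
      rw [isInvolution_iff_cycleType.1 ha, isInvolution_iff_cycleType.1 hb])) card_support)
  exact ⟨s, s.2, congrArg Subtype.val hs⟩

end IsInvolution

/-- The defining conditions of the Nielsen class, for the list of entries of a tuple. -/
structure IsNielsen (l : List (Perm (Fin 6))) : Prop where
  isInvolution : ∀ x ∈ l, IsInvolution x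
  prod_eq : l.prod = 1
  closure_eq : Subgroup.closure {x | x ∈ l} = alternatingGroup (Fin 6)

namespace IsNielsen

theorem ofFn_iff {k : ℕ} {g : Fin k → Perm (Fin 6)} : IsNielsen (ofFn g) ↔ g ∈ NielsenSet k := by
  have range_eq : {x | x ∈ ofFn g} = Set.range g := by ext x; simp [mem_ofFn']
  constructor
  · rintro ⟨hi, hp, hc⟩
    rw [forall_mem_ofFn_iff] at hi
    exact ⟨fun i => (hi i).1, fun i => (hi i).2, hp, range_eq ▸ hc⟩
  · rintro ⟨h₁, h₂, hp, hc⟩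
    exact ⟨forall_mem_ofFn_iff.2 fun i => ⟨h₁ i, h₂ i⟩, hp, range_eq ▸ hc⟩

theorem of_braidEquiv {l m : List (Perm (Fin 6))} (hl : IsNielsen l) (h : BraidEquiv l m) :
    IsNielsen m where
  isInvolution := (h.forall_mem_iff fun _ _ => IsInvolution.inv_mul_mul_iff).1 hl.isInvolution
  prod_eq := h.prod_eq ▸ hl.prod_eq
  closure_eq := h.closure_eq ▸ hl.closure_eq

theorem map_conj {l : List (Perm (Fin 6))} (hl : IsNielsen l) (s : Perm (Fin 6)) :
    IsNielsen (l.map (MulAut.conj s)) where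
  isInvolution := forall_mem_map.2 fun x hx => (IsInvolution.conj_iff s).2 (hl.isInvolution x hx)
  prod_eq := by rw [← map_list_prod, hl.prod_eq, map_one]
  closure_eq := by
    have image_eq : {x | x ∈ l.map (MulAut.conj s)} =
        (MulAut.conj s).toMonoidHom '' {x | x ∈ l} := by
      ext x; simp
    rw [image_eq, ← MonoidHom.map_closure, hl.closure_eq]
    exact Subgroup.Normal.map_conj_eq _ s

end IsNielsen

end Involutions

section Codes

/-- The `i`-th octal digit of `n`. -/
def digit (n i : ℕ) : ℕ := n / 8 ^ i % 8

/-- The number with octal digits `f 0, …, f 5`, least significant first. -/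
def ofDigits (f : ℕ → ℕ) : ℕ :=
  f 0 + 8 * f 1 + 8 ^ 2 * f 2 + 8 ^ 3 * f 3 + 8 ^ 4 * f 4 + 8 ^ 5 * f 5

/-- The code of a permutation: the number whose octal digits are its values. Kernel arithmetic on
codes is much faster than on permutations; all finite verifications are run on codes. -/
def encode (g : Perm (Fin 6)) : ℕ := ofDigits fun i => g (Fin.ofNat 6 i)

/-- The code of a product, in terms of the codes of the factors. -/
def mulCode (a b : ℕ) : ℕ := ofDigits fun i => digit a (digit b i)

theorem ofDigits_congr {f g : ℕ → ℕ} (h : ∀ i < 6, f i = g i) : ofDigits f = ofDigits g := by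
  simp only [ofDigits, h 0, h 1, h 2, h 3, h 4, h 5, Nat.reduceLT]

theorem digit_ofDigits {f : ℕ → ℕ} (hf : ∀ i, f i < 8) {i : ℕ} (hi : i < 6) :
    digit (ofDigits f) i = f i := by
  have := hf 0; have := hf 1; have := hf 2; have := hf 3; have := hf 4; have := hf 5
  unfold digit ofDigits
  interval_cases i <;> omega

theorem digit_encode (g : Perm (Fin 6)) (i : Fin 6) : digit (encode g) i = g i := by
  rw [encode, digit_ofDigits (fun j => (g _).isLt.trans (by norm_num)) i.isLt]
  simp

theorem encode_injective : Function.Injective encode := fun g h e =>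
  Equiv.ext fun i => Fin.ext (by rw [← digit_encode, e, digit_encode])

theorem encode_mul (g h : Perm (Fin 6)) : encode (g * h) = mulCode (encode g) (encode h) :=
  ofDigits_congr fun i hi => by
    have : digit (encode h) i = h (Fin.ofNat 6 i) := by
      simpa [Nat.mod_eq_of_lt hi] using digit_encode h (Fin.ofNat 6 i)
    rw [this, digit_encode, Perm.mul_apply]

/-- `f n`, with `n` evaluated before the call, so that the kernel does not duplicate it. -/
def force {α : Type*} (n : ℕ) (f : ℕ → α) : α :=
  match n with
  | 0 => f 0
  | k + 1 => f (k + 1)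

theorem force_eq {α : Type*} (n : ℕ) (f : ℕ → α) : force n f = f n := by cases n <;> rfl

/-- `f l`, with the entries of `l` evaluated before the call. -/
def forceList {α : Type*} : List ℕ → (List ℕ → α) → α
  | [], f => f []
  | a :: l, f => force a fun a => forceList l fun l => f (a :: l)

theorem forceList_eq {α : Type*} (l : List ℕ) (f : List ℕ → α) : forceList l f = f l := by
  induction l generalizing f with
  | nil => rfl
  | cons a l ih => rw [forceList, force_eq, ih]

/-- The code of the conjugate of `a` by an involution `b`. -/
def conjCode (a b : ℕ) : ℕ := force (mulCode b a) fun c => mulCode c b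

theorem conjCode_encode (a : Perm (Fin 6)) {b : Perm (Fin 6)} (hb : b * b = 1) :
    conjCode (encode a) (encode b) = encode (MulAut.conj b a) := by
  rw [conjCode, force_eq, ← encode_mul, ← encode_mul, MulAut.conj_apply,
    inv_eq_of_mul_eq_one_left hb]

/-- The codes of the entries of a list. -/
abbrev codes (l : List (Perm (Fin 6))) : List ℕ := l.map encode

theorem codes_injective : Function.Injective codes := encode_injective.list_map

/-- Depth-first search along `next`: the states found when at most `n` states are taken off the
stack, together with the states `seen` before. -/
def explore (next : List ℕ → List (List ℕ)) :
    ℕ → List (List ℕ) → List (List ℕ) → List (List ℕ)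
  | 0, _, seen => seen
  | _ + 1, [], seen => seen
  | n + 1, t :: stack, seen => forceList t fun t =>
      bif seen.contains t then explore next n stack seen
      else explore next n (next t ++ stack) (t :: seen)

/-- The states reachable from `t` along `next`, in the cases below, where the search ends before
`1000` steps. -/
def orbit (next : List ℕ → List (List ℕ)) (t : List ℕ) : List (List ℕ) := explore next 1000 [t] []

theorem explore_induction {next : List ℕ → List (List ℕ)} {P : List ℕ → Prop}
    (hP : ∀ t, P t → ∀ t' ∈ next t, P t') {n : ℕ} {stack seen : List (List ℕ)}
    (hstack : ∀ t ∈ stack, P t) (hseen : ∀ t ∈ seen, P t) :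
    ∀ t ∈ explore next n stack seen, P t := by
  fun_induction explore next n stack seen with
  | case1 => exact hseen
  | case2 => exact hseen
  | case3 n t stack seen ih₁ ih₂ =>
    rw [forceList_eq]
    rw [forall_mem_cons] at hstack
    cases seen.contains t
    · exact ih₂ t (forall_mem_append.2 ⟨hP t hstack.1, hstack.2⟩)
        (forall_mem_cons.2 ⟨hstack.1, hseen⟩)
    · exact ih₁ hstack.2 hseen

/-- The codes of the lists obtained from a list of involutions by one braid move. -/
def braidMoves : List ℕ → List (List ℕ)
  | a :: b :: l => (b :: conjCode a b :: l) :: (braidMoves (b :: l)).map (a :: ·)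
  | _ => []

theorem exists_braidEquiv_of_mem_braidMoves {l : List (Perm (Fin 6))} (hl : ∀ x ∈ l, x * x = 1)
    {t : List ℕ} (ht : t ∈ braidMoves (codes l)) : ∃ m, BraidEquiv l m ∧ codes m = t := by
  induction l generalizing t with
  | nil => simp [braidMoves] at ht
  | cons a l ih =>
    cases l with
    | nil => simp [braidMoves] at ht
    | cons b l =>
      rw [forall_mem_cons] at hl
      simp only [codes, map_cons, braidMoves, mem_cons, mem_map] at ht
      have hb : b * b = 1 := hl.2 b mem_cons_self
      rcases ht with rfl | ⟨t, ht, rfl⟩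
      · refine ⟨b :: MulAut.conj b a :: l, .swap_of_eq [] ?_ l, by simp [conjCode_encode a hb]⟩
        rw [MulAut.conj_apply, inv_eq_of_mul_eq_one_left hb]
      · obtain ⟨m, hm, rfl⟩ := ih hl.2 ht
        exact ⟨a :: m, hm.append_left [a], rfl⟩

theorem exists_braidEquiv_of_mem_explore {l : List (Perm (Fin 6))} (hl : ∀ x ∈ l, IsInvolution x)
    {n : ℕ} : ∀ t ∈ explore braidMoves n [codes l] [], ∃ m, BraidEquiv l m ∧ codes m = t := by
  refine explore_induction ?_ (by simpa using ⟨l, .refl l, rfl⟩) (by simp)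
  rintro _ ⟨m, hm, rfl⟩ t ht
  have hm_inv := (hm.forall_mem_iff fun _ _ => IsInvolution.inv_mul_mul_iff).1 hl
  obtain ⟨m', hm', rfl⟩ := exists_braidEquiv_of_mem_braidMoves
    (fun x hx => (hm_inv x hx).mul_self) ht
  exact ⟨m', hm.trans hm', rfl⟩

end Codes

section ConjugacyClass

/-- The conjugates of a single code by the codes `v` of involutions. -/
def conjMoves (v : List ℕ) : List ℕ → List (List ℕ)
  | [x] => v.map fun p => [conjCode x p]
  | _ => []

/-- The codes of the conjugates of the permutation with code `x` by the group generated by the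
involutions with codes `v`. -/
def conjOrbit (v : List ℕ) (x : ℕ) : List ℕ := (orbit (conjMoves v) [x]).flatten

theorem exists_conj_of_mem_conjOrbit {v : List (Perm (Fin 6))} (hv : ∀ p ∈ v, p * p = 1)
    {x : Perm (Fin 6)} {c : ℕ} (hc : c ∈ conjOrbit (codes v) (encode x)) :
    ∃ s ∈ Subgroup.closure {p | p ∈ v}, encode (MulAut.conj s x) = c := by
  obtain ⟨t, ht, hct⟩ := mem_flatten.1 hc
  suffices h : ∃ s ∈ Subgroup.closure {p | p ∈ v}, t = [encode (MulAut.conj s x)] by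
    obtain ⟨s, hs, rfl⟩ := h
    exact ⟨s, hs, (mem_singleton.1 hct).symm⟩
  refine explore_induction
    (P := fun t => ∃ s ∈ Subgroup.closure {p | p ∈ v}, t = [encode (MulAut.conj s x)])
    ?_ (by simpa using ⟨1, one_mem _, by simp⟩) (by simp) t ht
  rintro _ ⟨s, hs, rfl⟩ t ht
  simp only [conjMoves, map_map, mem_map, Function.comp_apply] at ht
  obtain ⟨p, hp, rfl⟩ := ht
  exact ⟨p * s, mul_mem (Subgroup.subset_closure hp) hs, by
    rw [conjCode_encode _ (hv p hp), map_mul, MulAut.mul_apply]⟩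

/-- The transpositions generating `S₆`. -/
def adjacentSwaps : List (Perm (Fin 6)) := ofFn fun i : Fin 5 => swap i.castSucc i.succ

theorem adjacentSwaps_induction {P : Perm (Fin 6) → Prop} (hone : P 1)
    (hmul : ∀ s t, P s → P t → P (s * t)) (hswap : ∀ s ∈ adjacentSwaps, P s) (s) : P s := by
  have hs : s ∈ Submonoid.closure (Set.range fun i : Fin 5 => swap i.castSucc i.succ) := by
    rw [Perm.mclosure_swap_castSucc_succ]; trivial
  induction hs using Submonoid.closure_induction with
  | mem x hx => obtain ⟨i, rfl⟩ := hx; exact hswap _ (mem_ofFn.2 ⟨i, rfl⟩)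
  | one => exact hone
  | mul s t _ _ hs ht => exact hmul s t hs ht

theorem mul_self_of_mem_adjacentSwaps : ∀ s ∈ adjacentSwaps, s * s = 1 :=
  forall_mem_ofFn_iff.2 fun _ => swap_mul_self _ _

/-- The representative `(0 1)(2 3)` of the class of involutions. -/
def a₀ : Perm (Fin 6) := swap 0 1 * swap 2 3

/-- The codes of all involutions. -/
def involutions : List ℕ := conjOrbit (codes adjacentSwaps) (encode a₀)

theorem isInvolution_a₀ : IsInvolution a₀ := isInvolution_iff_cycleType.2 (by decide +kernel)

theorem exists_of_mem_involutions {c : ℕ} (hc : c ∈ involutions) :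
    ∃ x, IsInvolution x ∧ encode x = c := by
  obtain ⟨s, -, rfl⟩ := exists_conj_of_mem_conjOrbit mul_self_of_mem_adjacentSwaps hc
  exact ⟨_, (IsInvolution.conj_iff s).2 isInvolution_a₀, rfl⟩

theorem conjCode_mem_involutions :
    ∀ c ∈ involutions, ∀ s ∈ codes adjacentSwaps, conjCode c s ∈ involutions := by
  decide +kernel

theorem encode_mem_involutions {x : Perm (Fin 6)} : encode x ∈ involutions ↔ IsInvolution x := by
  constructor
  · intro h
    obtain ⟨y, hy, e⟩ := exists_of_mem_involutions h
    exact encode_injective e ▸ hy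
  intro hx
  have conj_mem : ∀ s y, encode y ∈ involutions → encode (MulAut.conj s y) ∈ involutions := by
    refine adjacentSwaps_induction (by simp) (fun s t hs ht y hy => ?_) fun s hs y hy => ?_
    · rw [map_mul]; exact hs _ (ht y hy)
    · rw [← conjCode_encode _ (mul_self_of_mem_adjacentSwaps s hs)]
      exact conjCode_mem_involutions _ hy _ (mem_map_of_mem hs)
  obtain ⟨s, -, rfl⟩ := isInvolution_a₀.exists_conj_eq hx
  exact conj_mem s a₀ (by decide +kernel)

theorem closure_eq_alternatingGroup {v : List (Perm (Fin 6))} (hv : ∀ p ∈ v, IsInvolution p)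
    {x : Perm (Fin 6)} (hx : x ∈ v) (h : involutions ⊆ conjOrbit (codes v) (encode x)) :
    Subgroup.closure {p | p ∈ v} = alternatingGroup (Fin 6) := by
  refine le_antisymm ((Subgroup.closure_le _).2 fun p hp => (hv p hp).1) ?_
  rw [← Perm.closure_cycleType_eq_two_two_eq_alternatingGroup (by simp), Subgroup.closure_le]
  intro g hg
  obtain ⟨s, hs, e⟩ := exists_conj_of_mem_conjOrbit (fun p hp => (hv p hp).mul_self)
    (h (encode_mem_involutions.2 (isInvolution_iff_cycleType.2 hg)))
  rw [← encode_injective e]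
  exact mul_mem (mul_mem hs (Subgroup.subset_closure hx)) (inv_mem hs)

/-- The conjugates of `x` under the group generated by `v` do not exhaust the involutions. -/
def ConjOrbitProper (v : List ℕ) (x : ℕ) : Prop :=
  x ∈ conjOrbit v x ∧ (∀ c ∈ conjOrbit v x, ∀ p ∈ v, conjCode c p ∈ conjOrbit v x) ∧
    ∃ c ∈ involutions, c ∉ conjOrbit v x

instance (v : List ℕ) (x : ℕ) : Decidable (ConjOrbitProper v x) :=
  inferInstanceAs (Decidable (_ ∧ _ ∧ _))

theorem IsNielsen.not_conjOrbitProper {l v : List (Perm (Fin 6))} (hl : IsNielsen l)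
    (hv : ∀ x, x ∈ v ↔ x ∈ l) {x : Perm (Fin 6)} (hx : x ∈ v) :
    ¬ ConjOrbitProper (codes v) (encode x) := by
  rintro ⟨hxS, hS, c, hc, hcS⟩
  have conj_mem_iff : ∀ s ∈ Subgroup.closure {p | p ∈ v}, ∀ z,
      encode (MulAut.conj s z) ∈ conjOrbit (codes v) (encode x) ↔
        encode z ∈ conjOrbit (codes v) (encode x) := by
    intro s hs
    induction hs using Subgroup.closure_induction with
    | mem p hp =>
      have hpp := (hl.isInvolution p ((hv p).1 hp)).mul_self
      have conj_mem (z) (hz : encode z ∈ conjOrbit (codes v) (encode x)) :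
          encode (MulAut.conj p z) ∈ conjOrbit (codes v) (encode x) := by
        rw [← conjCode_encode _ hpp]
        exact hS _ hz _ (mem_map_of_mem hp)
      refine fun z => ⟨fun h => ?_, conj_mem z⟩
      simpa only [← MulAut.mul_apply, ← map_mul, hpp, map_one, MulAut.one_apply] using conj_mem _ h
    | one => simp
    | mul s t _ _ hs ht => exact fun z => by rw [map_mul, MulAut.mul_apply, hs, ht]
    | inv s _ hs =>
      intro z
      rw [← hs, ← MulAut.mul_apply, ← map_mul, mul_inv_cancel, map_one, MulAut.one_apply]
  obtain ⟨y, hy, rfl⟩ := exists_of_mem_involutions hc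
  obtain ⟨s, hs, rfl⟩ := (hl.isInvolution x ((hv x).1 hx)).exists_conj_eq hy
  rw [← hl.closure_eq, ← show {p | p ∈ v} = {p | p ∈ l} from Set.ext hv] at hs
  exact hcS ((conj_mem_iff s hs x).2 hxS)

/-- Generators of the centralizer of `a₀` in `S₆`. -/
def centralizerGens : List (Perm (Fin 6)) := [swap 0 1, swap 0 2 * swap 1 3, swap 4 5]

/-- Representatives of the involutions up to conjugation by the centralizer of `a₀`. -/
def pairReps : List (Perm (Fin 6)) :=
  [swap 0 1 * swap 2 3, swap 0 1 * swap 4 5, swap 0 2 * swap 1 3, swap 0 1 * swap 2 4,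
    swap 0 2 * swap 4 5, swap 0 2 * swap 1 4, swap 0 4 * swap 2 5, swap 2 4 * swap 3 5]

theorem exists_conj_of_mem_conjOrbit_centralizerGens {x y : Perm (Fin 6)}
    (h : encode y ∈ conjOrbit (codes centralizerGens) (encode x)) :
    ∃ s, MulAut.conj s a₀ = a₀ ∧ MulAut.conj s y = x := by
  obtain ⟨s, hs, e⟩ := exists_conj_of_mem_conjOrbit (by decide) h
  have commute : s ∈ Subgroup.centralizer {a₀} := by
    refine (Subgroup.closure_le _).2 (fun p hp => ?_) hs
    rw [SetLike.mem_coe, Subgroup.mem_centralizer_singleton_iff]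
    revert p; decide
  rw [Subgroup.mem_centralizer_singleton_iff] at commute
  refine ⟨s⁻¹, ?_, ?_⟩
  · rw [map_inv, MulAut.inv_apply, MulEquiv.symm_apply_eq, MulAut.conj_apply, commute,
      mul_inv_cancel_right]
  · rw [← encode_injective e, map_inv, MulAut.inv_apply, MulEquiv.symm_apply_apply]

theorem exists_mem_pairReps_conjOrbit :
    ∀ c ∈ involutions, ∃ b ∈ codes pairReps, c ∈ conjOrbit (codes centralizerGens) b := by
  decide +kernel

theorem exists_conj_pair {a b : Perm (Fin 6)} (ha : IsInvolution a) (hb : IsInvolution b) :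
    ∃ s, MulAut.conj s a = a₀ ∧ MulAut.conj s b ∈ pairReps := by
  obtain ⟨s, -, hs⟩ := ha.exists_conj_eq isInvolution_a₀
  obtain ⟨_, hx, hc⟩ := exists_mem_pairReps_conjOrbit (encode (MulAut.conj s b))
    (encode_mem_involutions.2 ((IsInvolution.conj_iff s).2 hb))
  obtain ⟨x, hx, rfl⟩ := mem_map.1 hx
  obtain ⟨t, ht₀, ht⟩ := exists_conj_of_mem_conjOrbit_centralizerGens hc
  refine ⟨t * s, ?_, ?_⟩
  · rw [map_mul, MulAut.mul_apply, hs, ht₀]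
  · rwa [map_mul, MulAut.mul_apply, ht]

end ConjugacyClass

section EqualPair

/-- Some braid equivalent list starts with two equal entries. -/
def HasPair (l : List (Perm (Fin 6))) : Prop := ∃ a v, BraidEquiv l (a :: a :: v)

namespace HasPair

theorem of_braidEquiv {l m : List (Perm (Fin 6))} (h : BraidEquiv l m) : HasPair m → HasPair l := by
  rintro ⟨a, v, hm⟩
  exact ⟨a, v, h.trans hm⟩

theorem of_map_conj {l : List (Perm (Fin 6))} (s : Perm (Fin 6)) :
    HasPair (l.map (MulAut.conj s)) → HasPair l := by
  rintro ⟨a, v, h⟩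
  exact ⟨_, _, by simpa [Function.comp_def, mul_assoc] using h.map (MulAut.conj s⁻¹).toMonoidHom⟩

theorem append_cons_cons {u v : List (Perm (Fin 6))} {a : Perm (Fin 6)} (ha : IsInvolution a) :
    HasPair (u ++ a :: a :: v) := ⟨a, u ++ v, .pair_front ha.mul_self u v⟩

end HasPair

theorem pairReps_not_normalized : ∀ b ∈ codes pairReps, b = encode a₀ ∨ ∃ x ∈ involutions,
    conjCode (mulCode (encode a₀) b) x ≠ mulCode (encode a₀) b ∧
      conjCode (mulCode (encode a₀) b) x ≠ mulCode b (encode a₀) := by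
  decide +kernel

theorem exists_conj_mul_ne {a b : Perm (Fin 6)} (ha : IsInvolution a) (hb : IsInvolution b)
    (hab : a ≠ b) : ∃ x, IsInvolution x ∧ MulAut.conj x (a * b) ≠ a * b ∧
      MulAut.conj x (a * b) ≠ (a * b)⁻¹ := by
  obtain ⟨s, hs, hsb⟩ := exists_conj_pair ha hb
  rcases pairReps_not_normalized _ (mem_map_of_mem hsb) with e | ⟨_, hc, h, h'⟩
  · exact absurd ((MulAut.conj s).injective (hs.trans (encode_injective e).symm)) hab
  obtain ⟨x, hx, rfl⟩ := exists_of_mem_involutions hc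
  simp only [← encode_mul, conjCode_encode _ hx.mul_self, ne_eq, encode_injective.eq_iff, ← hs,
    ← map_mul] at h h'
  have conj_conj (y) : MulAut.conj s (MulAut.conj (MulAut.conj s⁻¹ x) y) =
      MulAut.conj x (MulAut.conj s y) := by
    simp [mul_assoc]
  refine ⟨MulAut.conj s⁻¹ x, (IsInvolution.conj_iff _).2 hx, fun e => h ?_, fun e => h' ?_⟩
  · rw [← conj_conj, e]
  · rw [← conj_conj, e, mul_inv_rev, ha.inv_eq, hb.inv_eq]

theorem conj_eq_or_eq_inv_of_mem_closure {G : Type*} [Group G] {S : Set G} {z : G}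
    (h : ∀ g ∈ S, MulAut.conj g z = z⁻¹) {s : G} (hs : s ∈ Subgroup.closure S) :
    MulAut.conj s z = z ∨ MulAut.conj s z = z⁻¹ := by
  induction hs using Subgroup.closure_induction with
  | mem p hp => exact .inr (h p hp)
  | one => simp
  | mul s t _ _ hs ht =>
    rw [map_mul, MulAut.mul_apply]
    rcases ht with ht | ht <;> rcases hs with hs | hs <;>
      simp only [ht, map_inv, hs, inv_inv, true_or, or_true]
  | inv s _ hs =>
    rw [map_inv, MulAut.inv_apply, MulEquiv.symm_apply_eq, MulEquiv.symm_apply_eq]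
    rcases hs with hs | hs <;> simp only [map_inv, hs, inv_inv, true_or, or_true]

theorem IsNielsen.exists_mul_mul_sq_ne_one {a b : Perm (Fin 6)} {l : List (Perm (Fin 6))}
    (hl : IsNielsen (a :: b :: l)) (hab : a ≠ b) : ∃ g ∈ l, (a * b * g) ^ 2 ≠ 1 := by
  have ha := hl.isInvolution a (by simp)
  have hb := hl.isInvolution b (by simp)
  by_contra! h
  have conj_eq : ∀ g ∈ a :: b :: l, MulAut.conj g (a * b) = (a * b)⁻¹ := by
    simp only [forall_mem_cons, MulAut.conj_apply, mul_inv_rev, ha.inv_eq, hb.inv_eq]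
    refine ⟨by rw [← mul_assoc, ha.mul_self, one_mul],
      by rw [mul_assoc, mul_assoc, hb.mul_self, mul_one], fun g hg => ?_⟩
    have hg' := hl.isInvolution g (by simp [hg])
    have := h g hg
    rw [sq, mul_assoc] at this
    rw [hg'.inv_eq, mul_assoc, eq_inv_of_mul_eq_one_right this, mul_inv_rev, hb.inv_eq, ha.inv_eq]
  obtain ⟨x, hx, h₁, h₂⟩ := exists_conj_mul_ne ha hb hab
  exact (conj_eq_or_eq_inv_of_mem_closure conj_eq (hl.closure_eq ▸ hx.1)).elim h₁ h₂

theorem exists_triple_sq_ne_one {l : List (Perm (Fin 6))} (hl : IsNielsen l) (hlen : l.length = 6)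
    (h : ¬ HasPair l) :
    ∃ t t', BraidEquiv l (t ++ t') ∧ t.length = 3 ∧ t'.length = 3 ∧ t.prod ^ 2 ≠ 1 := by
  obtain ⟨a, b, v, rfl⟩ : ∃ a b v, l = a :: b :: v := by
    match l, hlen with
    | a :: b :: v, _ => exact ⟨a, b, v, rfl⟩
  have hab : a ≠ b := by rintro rfl; exact h ⟨a, v, .refl _⟩
  obtain ⟨g, hg, hsq⟩ := hl.exists_mul_mul_sq_ne_one hab
  obtain ⟨u, w, rfl⟩ := append_of_mem hg
  refine ⟨[a, b, g], u.map (fun x => g⁻¹ * x * g) ++ w,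
    (BraidEquiv.cons_front u g w).append_left [a, b], rfl, ?_, by simpa [mul_assoc] using hsq⟩
  simp at hlen ⊢; omega

/-- A list of braid orbits whose union contains the given lists of codes. -/
def orbitCover : List (List ℕ) → List (List (List ℕ))
  | [] => []
  | t :: ts =>
    let os := orbitCover ts
    bif os.any (·.contains t) then os else orbit braidMoves t :: os

/-- The codes of the triples of involutions with product of code `w`. -/
def triples (w : ℕ) : List (List ℕ) :=
  involutions.flatMap fun a => involutions.filterMap fun b =>
    force (mulCode b (mulCode a w)) fun c =>
      bif involutions.contains c then some [a, b, c] else none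

/-- For each orbit in the cover of the triples with product of code `w`, the last entries. -/
def lastEntries (w : ℕ) : List (List ℕ) :=
  (orbitCover (triples w)).map fun A => (A.map fun t => t.getLastD 0).dedup

theorem subset_explore {next : List ℕ → List (List ℕ)} (n : ℕ) (stack seen : List (List ℕ)) :
    seen ⊆ explore next n stack seen := by
  fun_induction explore next n stack seen with
  | case1 => exact Subset.refl _
  | case2 => exact Subset.refl _
  | case3 n t stack seen ih₁ ih₂ =>
    rw [forceList_eq]
    cases seen.contains t
    · exact fun _ h => ih₂ _ (mem_cons_of_mem _ h)
    · exact ih₁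

theorem mem_orbit_self (next : List ℕ → List (List ℕ)) (t : List ℕ) : t ∈ orbit next t := by
  rw [orbit, explore, forceList_eq]
  exact subset_explore _ _ _ (mem_cons_self)

theorem exists_mem_orbitCover {ts : List (List ℕ)} {t : List ℕ} (ht : t ∈ ts) :
    ∃ A ∈ orbitCover ts, t ∈ A := by
  induction ts with
  | nil => simp at ht
  | cons t' ts ih =>
    rw [orbitCover]
    rcases mem_cons.1 ht with rfl | ht
    · cases h : (orbitCover ts).any (·.contains t)
      · exact ⟨_, mem_cons_self, mem_orbit_self _ _⟩
      · simpa using h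
    · obtain ⟨A, hA, htA⟩ := ih ht
      cases (orbitCover ts).any (·.contains t')
      · exact ⟨A, mem_cons_of_mem _ hA, htA⟩
      · exact ⟨A, hA, htA⟩

theorem exists_eq_orbit_of_mem_orbitCover {ts A} (hA : A ∈ orbitCover ts) :
    ∃ t ∈ ts, A = orbit braidMoves t := by
  induction ts with
  | nil => simp [orbitCover] at hA
  | cons t ts ih =>
    have of_tail (h : A ∈ orbitCover ts) : ∃ t' ∈ t :: ts, A = orbit braidMoves t' := by
      obtain ⟨t', ht', rfl⟩ := ih h
      exact ⟨t', mem_cons_of_mem _ ht', rfl⟩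
    rw [orbitCover] at hA
    cases h : (orbitCover ts).any (·.contains t) <;> rw [h] at hA
    · rcases mem_cons.1 hA with rfl | hA
      · exact ⟨t, mem_cons_self, rfl⟩
      · exact of_tail hA
    · exact of_tail hA

theorem mem_triples {w : ℕ} {t : List ℕ} : t ∈ triples w ↔ ∃ a ∈ involutions, ∃ b ∈ involutions,
    mulCode b (mulCode a w) ∈ involutions ∧ t = [a, b, mulCode b (mulCode a w)] := by
  simp only [triples, mem_flatMap, mem_filterMap, force_eq]
  refine exists_congr fun a => and_congr_right fun _ =>
    exists_congr fun b => and_congr_right fun _ => ?_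
  cases h : involutions.contains (mulCode b (mulCode a w))
  · simp_all
  · simp_all [eq_comm]

theorem exists_braidEquiv_of_mem_orbitCover {ts : List (List ℕ)}
    (hts : ∀ t ∈ ts, ∃ m, (∀ x ∈ m, IsInvolution x) ∧ codes m = t) {A : List (List ℕ)}
    (hA : A ∈ orbitCover ts) {l : List (Perm (Fin 6))} (hl : codes l ∈ A) :
    ∀ t ∈ A, ∃ m, BraidEquiv l m ∧ codes m = t := by
  obtain ⟨_, ht, rfl⟩ := exists_eq_orbit_of_mem_orbitCover hA
  obtain ⟨m, hm, rfl⟩ := hts _ ht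
  obtain ⟨l', hl', e⟩ := exists_braidEquiv_of_mem_explore hm _ hl
  obtain rfl := codes_injective e
  intro t ht
  obtain ⟨m', hm', rfl⟩ := exists_braidEquiv_of_mem_explore hm t ht
  exact ⟨m', hl'.symm.trans hm', rfl⟩

theorem codes_mem_triples {t : List (Perm (Fin 6))} (ht : ∀ x ∈ t, IsInvolution x)
    (hlen : t.length = 3) : codes t ∈ triples (encode t.prod) := by
  obtain ⟨a, b, c, rfl⟩ := length_eq_three.1 hlen
  simp only [forall_mem_cons] at ht
  have c_eq : mulCode (encode b) (mulCode (encode a) (encode [a, b, c].prod)) = encode c := by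
    rw [← encode_mul, ← encode_mul]
    simp [← mul_assoc, ht.1.mul_self, ht.2.1.mul_self]
  exact mem_triples.2 ⟨_, encode_mem_involutions.2 ht.1, _, encode_mem_involutions.2 ht.2.1,
    c_eq ▸ encode_mem_involutions.2 ht.2.2.1, by rw [c_eq]; rfl⟩

theorem exists_of_mem_triples {w : ℕ} : ∀ t ∈ triples w,
    ∃ m, (∀ x ∈ m, IsInvolution x) ∧ codes m = t := by
  intro t ht
  obtain ⟨a, ha, b, hb, hc, rfl⟩ := mem_triples.1 ht
  obtain ⟨x, hx, rfl⟩ := exists_of_mem_involutions ha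
  obtain ⟨y, hy, rfl⟩ := exists_of_mem_involutions hb
  obtain ⟨z, hz, e⟩ := exists_of_mem_involutions hc
  exact ⟨[x, y, z], by simp [hx, hy, hz], by simp [e]⟩

theorem exists_mem_lastEntries {t : List (Perm (Fin 6))} (ht : ∀ x ∈ t, IsInvolution x)
    (hlen : t.length = 3) : ∃ X ∈ lastEntries (encode t.prod), ∀ c ∈ X,
      ∃ p q x, BraidEquiv t [p, q, x] ∧ encode x = c := by
  obtain ⟨A, hA, htA⟩ := exists_mem_orbitCover (codes_mem_triples ht hlen)
  refine ⟨_, mem_map_of_mem hA, fun c hc => ?_⟩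
  obtain ⟨s, hs, rfl⟩ := mem_map.1 (mem_dedup.1 hc)
  obtain ⟨m, hm, rfl⟩ := exists_braidEquiv_of_mem_orbitCover exists_of_mem_triples hA htA s hs
  obtain ⟨p, q, x, rfl⟩ := length_eq_three.1 (hm.length_eq.symm.trans hlen)
  exact ⟨p, q, x, hm, rfl⟩

/- The last three entries of a product-one tuple of involutions, reversed, have the same product as
the first three. -/
theorem exists_middle_entries {t t' : List (Perm (Fin 6))} (hN : IsNielsen (t ++ t'))
    (ht : t.length = 3) (ht' : t'.length = 3) {P : ℕ → ℕ → Prop}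
    (hP : ∀ X ∈ lastEntries (encode t.prod), ∀ Y ∈ lastEntries (encode t.prod),
      ∃ c ∈ X, ∃ d ∈ Y, P c d) :
    ∃ p q x y r s, BraidEquiv (t ++ t') [p, q, x, y, r, s] ∧ [p, q, x].prod = t.prod ∧
      P (encode x) (encode y) := by
  have hinv := hN.isInvolution
  rw [forall_mem_append] at hinv
  have map_inv_eq {l : List (Perm (Fin 6))} (hl : ∀ x ∈ l, IsInvolution x) : l.map (·⁻¹) = l :=
    (map_congr_left fun x hx => (hl x hx).inv_eq).trans (map_id' l)
  have prod_reverse : t'.reverse.prod = t.prod := by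
    rw [← map_inv_eq hinv.2, ← prod_inv_reverse, eq_comm, eq_inv_iff_mul_eq_one, ← prod_append,
      hN.prod_eq]
  have hrev : ∀ x ∈ t'.reverse, IsInvolution x := by simpa using hinv.2
  obtain ⟨X, hX, hXt⟩ := exists_mem_lastEntries hinv.1 ht
  obtain ⟨Y, hY, hYt⟩ := exists_mem_lastEntries hrev (by simpa using ht')
  obtain ⟨c, hc, d, hd, h⟩ := hP X hX Y (prod_reverse ▸ hY)
  obtain ⟨p, q, x, htx, rfl⟩ := hXt c hc
  obtain ⟨s, r, y, hty, rfl⟩ := hYt d hd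
  have hsry := (hty.forall_mem_iff fun _ _ => IsInvolution.inv_mul_mul_iff).1 hrev
  refine ⟨p, q, x, y, r, s, htx.append ?_, htx.prod_eq.symm, h⟩
  simpa only [map_inv_eq hrev, map_inv_eq hsry, reverse_reverse, reverse_cons, reverse_nil,
    nil_append, cons_append] using hty.reverse_inv

/-- The codes of the elements of order five. -/
def fiveCycles : List ℕ := conjOrbit (codes adjacentSwaps) (encode c[0, 1, 2, 3, 4])

theorem cycleType_of_mem_fiveCycles {g : Perm (Fin 6)} (hg : encode g ∈ fiveCycles) :
    g.cycleType = {5} := by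
  obtain ⟨s, -, e⟩ := exists_conj_of_mem_conjOrbit mul_self_of_mem_adjacentSwaps hg
  rw [← encode_injective e, MulAut.conj_apply, Perm.cycleType_conj]
  decide +kernel

/-- Two triples with product `w` whose last entries are suitably chosen can be joined to a tuple
whose middle entries are equal, or whose first three entries have a product of order five after
the middle entries are swapped. -/
def MiddleCondition (w : ℕ) (c d : ℕ) : Prop := c = d ∨ mulCode (mulCode w c) d ∈ fiveCycles

instance (w : ℕ) : DecidableRel (MiddleCondition w) := fun _ _ =>
  inferInstanceAs (Decidable (_ ∨ _))

theorem lastEntries_five : ∀ X ∈ lastEntries (encode c[0, 1, 2, 3, 4]),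
    ∀ Y ∈ lastEntries (encode c[0, 1, 2, 3, 4]), ∃ c ∈ X, ∃ d ∈ Y, c = d := by
  decide +kernel

theorem lastEntries_three : ∀ X ∈ lastEntries (encode c[0, 1, 2]),
    ∀ Y ∈ lastEntries (encode c[0, 1, 2]), ∃ c ∈ X, ∃ d ∈ Y,
      MiddleCondition (encode c[0, 1, 2]) c d := by
  decide +kernel

theorem lastEntries_three_three : ∀ X ∈ lastEntries (encode (c[0, 1, 2] * c[3, 4, 5])),
    ∀ Y ∈ lastEntries (encode (c[0, 1, 2] * c[3, 4, 5])), ∃ c ∈ X, ∃ d ∈ Y,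
      MiddleCondition (encode (c[0, 1, 2] * c[3, 4, 5])) c d := by
  decide +kernel

theorem lastEntries_four_two : ∀ X ∈ lastEntries (encode (c[0, 1, 2, 3] * c[4, 5])),
    ∀ Y ∈ lastEntries (encode (c[0, 1, 2, 3] * c[4, 5])), ∃ c ∈ X, ∃ d ∈ Y,
      MiddleCondition (encode (c[0, 1, 2, 3] * c[4, 5])) c d := by
  decide +kernel

theorem hasPair_of_isConj {t t' : List (Perm (Fin 6))} (hN : IsNielsen (t ++ t'))
    {w : Perm (Fin 6)} (hw : IsConj t.prod w)
    (H : ∀ s, IsNielsen (t.map (MulAut.conj s) ++ t'.map (MulAut.conj s)) →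
      (t.map (MulAut.conj s)).prod = w →
      HasPair (t.map (MulAut.conj s) ++ t'.map (MulAut.conj s))) : HasPair (t ++ t') := by
  obtain ⟨s, hs⟩ := isConj_iff.1 hw
  refine .of_map_conj s ?_
  rw [map_append]
  exact H s (by simpa using hN.map_conj s) (by rw [← map_list_prod, MulAut.conj_apply, hs])

theorem hasPair_of_five {t t' : List (Perm (Fin 6))} (hN : IsNielsen (t ++ t'))
    (ht : t.length = 3) (ht' : t'.length = 3) (h : t.prod.cycleType = {5}) : HasPair (t ++ t') := by
  have isConj : IsConj t.prod c[0, 1, 2, 3, 4] :=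
    Perm.isConj_iff_cycleType_eq.2 (h.trans (by decide +kernel))
  refine hasPair_of_isConj hN isConj fun s hN hs => ?_
  obtain ⟨p, q, x, y, r, s, hm, -, e⟩ :=
    exists_middle_entries hN (by simpa) (by simpa) (hs ▸ lastEntries_five)
  obtain rfl := encode_injective e
  exact .of_braidEquiv hm
    (.append_cons_cons (u := [p, q]) ((hN.of_braidEquiv hm).isInvolution x (by simp)))

theorem hasPair_of_middleCondition {t t' : List (Perm (Fin 6))} (hN : IsNielsen (t ++ t'))
    (ht : t.length = 3) (ht' : t'.length = 3)
    (h : ∀ X ∈ lastEntries (encode t.prod), ∀ Y ∈ lastEntries (encode t.prod),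
      ∃ c ∈ X, ∃ d ∈ Y, MiddleCondition (encode t.prod) c d) : HasPair (t ++ t') := by
  obtain ⟨p, q, x, y, r, s, hm, hprod, e | hfive⟩ := exists_middle_entries hN ht ht' h
  · obtain rfl := encode_injective e
    exact .of_braidEquiv hm
      (.append_cons_cons (u := [p, q]) ((hN.of_braidEquiv hm).isInvolution x (by simp)))
  · have hm' := hm.trans (.swap [p, q] x y [r, s])
    have hx := (hN.of_braidEquiv hm).isInvolution x (by simp)
    refine .of_braidEquiv hm' (hasPair_of_five (t := [p, q, y]) (hN.of_braidEquiv hm') rfl rfl ?_)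
    rw [← encode_mul, ← encode_mul, ← hprod] at hfive
    simpa [mul_assoc, hx.mul_self] using cycleType_of_mem_fiveCycles hfive

theorem IsNielsen.hasPair {l : List (Perm (Fin 6))} (hl : IsNielsen l) (hlen : l.length = 6) :
    HasPair l := by
  by_contra h
  obtain ⟨t, t', hm, ht, ht', hsq⟩ := exists_triple_sq_ne_one hl hlen h
  have hN := hl.of_braidEquiv hm
  refine h (.of_braidEquiv hm ?_)
  have of_isConj {w : Perm (Fin 6)} (hw : t.prod.cycleType = w.cycleType)
      (hP : ∀ X ∈ lastEntries (encode w), ∀ Y ∈ lastEntries (encode w),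
        ∃ c ∈ X, ∃ d ∈ Y, MiddleCondition (encode w) c d) : HasPair (t ++ t') :=
    hasPair_of_isConj hN (Perm.isConj_iff_cycleType_eq.2 hw) fun s hN hs =>
      hasPair_of_middleCondition hN (by simpa) (by simpa) (hs ▸ hP)
  have even : t.prod ∈ alternatingGroup (Fin 6) :=
    list_prod_mem fun x hx => (hN.isInvolution x (by simp [hx])).1
  rcases cycleType_of_sq_ne_one even hsq with h3 | h33 | h42 | h5
  · exact of_isConj (h3.trans (by decide +kernel)) lastEntries_three
  · exact of_isConj (h33.trans (by decide +kernel)) lastEntries_three_three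
  · exact of_isConj (h42.trans (by decide +kernel)) lastEntries_four_two
  · exact hasPair_of_five hN ht ht' h5

end EqualPair

section Quadruples

/-- An involution that generates a dihedral group of order ten together with `a₀`. -/
def b₀ : Perm (Fin 6) := swap 0 2 * swap 1 4

/-- The last four entries of the representative `repA`. -/
def tailA : List (Perm (Fin 6)) :=
  [swap 0 1 * swap 2 3, swap 0 1 * swap 2 4, swap 0 5 * swap 2 4, swap 0 5 * swap 2 3]

/-- Elements of the centralizer of `a₀` that relate the braid orbits of the quadruples starting
with `a₀` whose entries cannot be made equal in pairs. -/
def twists : List (Perm (Fin 6)) := [1, swap 0 1, swap 4 5, swap 0 1 * swap 4 5]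

/-- The code of a quadruple from which two equal neighbours are reached by a short search, or which
is conjugate to an element of the braid orbit of `tailA`. -/
def PairOrTailA (t : List ℕ) : Prop :=
  (∃ s ∈ explore braidMoves 7 [t] [], ¬ s.IsChain (· ≠ ·)) ∨
    ∃ γ ∈ codes twists, t.map (conjCode · γ) ∈ orbit braidMoves (codes tailA)

instance (t : List ℕ) : Decidable (PairOrTailA t) := inferInstanceAs (Decidable (_ ∨ _))

theorem pairOrTailA_of_mem_pairReps : ∀ b ∈ codes pairReps, ∀ c ∈ involutions,
    mulCode (mulCode (encode a₀) b) c ∈ involutions →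
      PairOrTailA [encode a₀, b, c, mulCode (mulCode (encode a₀) b) c] := by
  decide +kernel

theorem isInvolution_tailA : ∀ x ∈ tailA, IsInvolution x := by
  have h : ∀ c ∈ codes tailA, c ∈ involutions := by decide +kernel
  exact fun x hx => encode_mem_involutions.1 (h _ (mem_map_of_mem hx))

theorem exists_two_pairs_of_not_isChain {v m : List (Perm (Fin 6))} (hv : ∀ x ∈ v, IsInvolution x)
    (hlen : v.length = 4) (hprod : v.prod = 1) (hm : BraidEquiv v m)
    (hchain : ¬ m.IsChain (· ≠ ·)) : ∃ b c, BraidEquiv v [b, b, c, c] := by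
  simp only [isChain_iff_forall_rel_of_append_cons_cons, ne_eq, not_forall, not_not] at hchain
  obtain ⟨y, _, u, w, rfl, rfl⟩ := hchain
  have hm_inv := (hm.forall_mem_iff fun _ _ => IsInvolution.inv_mul_mul_iff).1 hv
  have hvy : BraidEquiv v (y :: y :: (u ++ w)) :=
    hm.trans (.pair_front (hm_inv y (by simp)).mul_self u w)
  have hvy_inv := (hvy.forall_mem_iff fun _ _ => IsInvolution.inv_mul_mul_iff).1 hv
  obtain ⟨c, d, huw⟩ := length_eq_two.1
    (show (u ++ w).length = 2 by simpa [hlen] using hvy.length_eq.symm)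
  rw [huw] at hvy hvy_inv
  simp only [forall_mem_cons] at hvy_inv
  have hcd : c * d = 1 := by
    simpa [← mul_assoc, hvy_inv.1.mul_self, hprod] using hvy.prod_eq.symm
  obtain rfl : c = d := by rw [← hvy_inv.2.2.1.inv_eq, inv_eq_of_mul_eq_one_right hcd]
  exact ⟨y, c, hvy⟩

theorem exists_two_pairs_or_absEquiv_of_pairOrTailA {v : List (Perm (Fin 6))}
    (hv : ∀ x ∈ v, IsInvolution x) (hlen : v.length = 4) (hprod : v.prod = 1)
    (h : PairOrTailA (codes v)) : (∃ b c, BraidEquiv v [b, b, c, c]) ∨ AbsEquiv v tailA := by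
  rcases h with ⟨_, ht, hchain⟩ | ⟨_, hγ, ht⟩
  · obtain ⟨m, hm, rfl⟩ := exists_braidEquiv_of_mem_explore hv _ ht
    rw [isChain_map] at hchain
    simp only [ne_eq, encode_injective.eq_iff] at hchain
    exact .inl (exists_two_pairs_of_not_isChain hv hlen hprod hm hchain)
  · obtain ⟨γ, hγ_mem, rfl⟩ := mem_map.1 hγ
    have hγγ : γ * γ = 1 := (by decide : ∀ γ ∈ twists, γ * γ = 1) γ hγ_mem
    have codes_conj : (codes v).map (conjCode · (encode γ)) = codes (v.map (MulAut.conj γ)) := by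
      simp [conjCode_encode _ hγγ]
    rw [codes_conj] at ht
    obtain ⟨m, hm, e⟩ := exists_braidEquiv_of_mem_explore isInvolution_tailA _ ht
    obtain rfl := codes_injective e
    exact .inr ⟨γ, hm.symm⟩

theorem exists_two_pairs_or_absEquiv_tailA {v : List (Perm (Fin 6))}
    (hv : ∀ x ∈ v, IsInvolution x) (hlen : v.length = 4) (hprod : v.prod = 1) :
    (∃ b c, BraidEquiv v [b, b, c, c]) ∨ AbsEquiv v tailA := by
  obtain ⟨a, b, c, d, rfl⟩ : ∃ a b c d, v = [a, b, c, d] := by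
    match v, hlen with
    | [a, b, c, d], _ => exact ⟨a, b, c, d, rfl⟩
  have hv' := hv
  simp only [forall_mem_cons] at hv
  obtain ⟨ha, hb, hc, hd, -⟩ := hv
  have hd_eq : d = a * b * c := by
    rw [← hd.inv_eq]
    exact inv_eq_of_mul_eq_one_left (by simpa [mul_assoc] using hprod)
  obtain ⟨s, hsa, hsb⟩ := exists_conj_pair ha hb
  have conj_d : encode (MulAut.conj s d) =
      mulCode (mulCode (encode a₀) (encode (MulAut.conj s b))) (encode (MulAut.conj s c)) := by
    rw [hd_eq, map_mul, map_mul, hsa, encode_mul, encode_mul]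
  have hcond : PairOrTailA (codes ([a, b, c, d].map (MulAut.conj s))) := by
    simp only [map_cons, map_nil, hsa, conj_d]
    refine pairOrTailA_of_mem_pairReps _ (mem_map_of_mem hsb) _
      (encode_mem_involutions.2 ((IsInvolution.conj_iff s).2 hc)) ?_
    rw [← conj_d]
    exact encode_mem_involutions.2 ((IsInvolution.conj_iff s).2 hd)
  rcases exists_two_pairs_or_absEquiv_of_pairOrTailA
    (forall_mem_map.2 fun x hx => (IsInvolution.conj_iff s).2 (hv' x hx)) rfl
    (by rw [← map_list_prod, hprod, map_one]) hcond with ⟨x, y, h⟩ | h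
  · refine .inl ⟨MulAut.conj s⁻¹ x, MulAut.conj s⁻¹ y, ?_⟩
    simpa [Function.comp_def, mul_assoc] using h.map (MulAut.conj s⁻¹).toMonoidHom
  · exact .inr ((AbsEquiv.map_conj _ s).trans h)

end Quadruples

section Representatives

/-- The codes of the elements `y` for which a pair `x, x` is turned into `y, y` by `pair_conj` or
`pair_dihedral`, applied with one of the elements of `v`. -/
def pairMoves (v : List ℕ) : List ℕ → List (List ℕ)
  | [x] => v.flatMap fun p => [conjCode x p] ::
      bif conjCode (conjCode x p) x == conjCode (conjCode p x) p then [[conjCode p x]] else []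
  | _ => []

/-- The codes reachable from `x` by the moves of `pairMoves`. -/
def pairOrbit (v : List ℕ) (x : ℕ) : List ℕ := (orbit (pairMoves v) [x]).flatten

theorem exists_pair_of_mem_pairMoves {v w : List (Perm (Fin 6))} (hv : ∀ p ∈ v, IsInvolution p)
    (hvw : v ⊆ w) {x : Perm (Fin 6)} (hx : IsInvolution x) {t : List ℕ}
    (ht : t ∈ pairMoves (codes v) [encode x]) :
    ∃ y, IsInvolution y ∧ t = [encode y] ∧ BraidEquiv (x :: x :: w) (y :: y :: w) := by
  simp only [pairMoves, flatMap_map, mem_flatMap, mem_cons] at ht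
  obtain ⟨p, hp, ht⟩ := ht
  have hp_inv := hv p hp
  have conj_eq {g : Perm (Fin 6)} (hg : IsInvolution g) (h : Perm (Fin 6)) :
      MulAut.conj g h = g⁻¹ * h * g := by rw [MulAut.conj_apply, hg.inv_eq]
  rw [conjCode_encode _ hp_inv.mul_self, conjCode_encode _ hx.mul_self,
    conjCode_encode _ hx.mul_self, conjCode_encode _ hp_inv.mul_self] at ht
  rcases ht with rfl | ht
  · refine ⟨_, (IsInvolution.conj_iff p).2 hx, rfl, ?_⟩
    rw [conj_eq hp_inv]
    exact .pair_conj hx.mul_self (hvw hp)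
  · obtain ⟨h, rfl⟩ : encode (MulAut.conj x (MulAut.conj p x)) =
        encode (MulAut.conj p (MulAut.conj x p)) ∧ t = [encode (MulAut.conj x p)] := by
      simpa [cond_eq_ite] using ht
    have relation : x * p * x * p * x = p * x * p * x * p := by
      simpa [conj_eq hx, conj_eq hp_inv, hx.inv_eq, hp_inv.inv_eq, mul_assoc] using
        encode_injective h
    refine ⟨_, (IsInvolution.conj_iff x).2 hp_inv, rfl, ?_⟩
    rw [conj_eq hx]
    exact .pair_dihedral hx.mul_self hp_inv.mul_self relation (hvw hp)

theorem exists_pair_of_mem_pairOrbit {v w : List (Perm (Fin 6))} (hv : ∀ p ∈ v, IsInvolution p)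
    (hvw : v ⊆ w) {x : Perm (Fin 6)} (hx : IsInvolution x) {c : ℕ}
    (hc : c ∈ pairOrbit (codes v) (encode x)) :
    ∃ y, IsInvolution y ∧ encode y = c ∧ BraidEquiv (x :: x :: w) (y :: y :: w) := by
  obtain ⟨t, ht, hct⟩ := mem_flatten.1 hc
  suffices h : ∃ y, IsInvolution y ∧ t = [encode y] ∧ BraidEquiv (x :: x :: w) (y :: y :: w) by
    obtain ⟨y, hy, rfl, h⟩ := h
    exact ⟨y, hy, (mem_singleton.1 hct).symm, h⟩
  refine explore_induction
    (P := fun t => ∃ y, IsInvolution y ∧ t = [encode y] ∧ BraidEquiv (x :: x :: w) (y :: y :: w))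
    ?_ (by simpa using ⟨x, hx, rfl, .refl _⟩) (by simp) t ht
  rintro _ ⟨y, hy, rfl, h⟩ t ht
  obtain ⟨z, hz, rfl, h'⟩ := exists_pair_of_mem_pairMoves hv hvw hy ht
  exact ⟨z, hz, rfl, h.trans h'⟩

theorem IsNielsen.pair_braidEquiv {y : Perm (Fin 6)} {v w : List (Perm (Fin 6))}
    (hN : IsNielsen (y :: y :: w)) (hvw : ∀ z, z ∈ v ↔ z ∈ w) {x : Perm (Fin 6)}
    (hx : IsInvolution x) (h : ∀ c ∈ involutions,
      c ∈ pairOrbit (codes v) (encode x) ∨ ConjOrbitProper (c :: codes v) c) :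
    BraidEquiv (x :: x :: w) (y :: y :: w) := by
  have hv : ∀ p ∈ v, IsInvolution p := fun p hp => hN.isInvolution p (by simp [(hvw p).1 hp])
  rcases h _ (encode_mem_involutions.2 (hN.isInvolution y (by simp))) with hc | hc
  · obtain ⟨y', -, e, h⟩ := exists_pair_of_mem_pairOrbit hv (fun p hp => (hvw p).1 hp) hx hc
    rwa [encode_injective e] at h
  · exact absurd hc (hN.not_conjOrbitProper (v := y :: v) (by simp [hvw]) (by simp))

/-- A representative of the class of tuples `[x, x, …]` with `tailA` as last four entries. -/
def repA : List (Perm (Fin 6)) := (swap 0 2 * swap 1 3) :: (swap 0 2 * swap 1 3) :: tailA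

/-- A representative of the class of tuples whose entries can be made equal in pairs. -/
def repB : List (Perm (Fin 6)) :=
  [swap 0 5 * swap 1 4, swap 0 5 * swap 1 4, a₀, a₀, b₀, b₀]

theorem isInvolution_repA : ∀ x ∈ repA, IsInvolution x := by
  have h : ∀ c ∈ codes repA, c ∈ involutions := by decide +kernel
  exact fun x hx => encode_mem_involutions.1 (h _ (mem_map_of_mem hx))

theorem isInvolution_repB : ∀ x ∈ repB, IsInvolution x := by
  have h : ∀ c ∈ codes repB, c ∈ involutions := by decide +kernel
  exact fun x hx => encode_mem_involutions.1 (h _ (mem_map_of_mem hx))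

theorem mem_pairOrbit_tailA : ∀ c ∈ involutions,
    c ∈ pairOrbit (codes tailA) (encode (swap 0 2 * swap 1 3)) ∨
      ConjOrbitProper (c :: codes tailA) c := by
  decide +kernel

theorem absEquiv_repA_of_tailA {x : Perm (Fin 6)} {v : List (Perm (Fin 6))}
    (hN : IsNielsen (x :: x :: v)) (h : AbsEquiv v tailA) : AbsEquiv repA (x :: x :: v) := by
  obtain ⟨s, hs⟩ := h
  let y := MulAut.conj s x
  have hv : BraidEquiv ((x :: x :: v).map (MulAut.conj s)) (y :: y :: tailA) :=
    hs.append_left [y, y]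
  have hy : BraidEquiv repA (y :: y :: tailA) := ((hN.map_conj s).of_braidEquiv hv).pair_braidEquiv
    (fun _ => .rfl) (isInvolution_repA _ mem_cons_self) mem_pairOrbit_tailA
  exact (AbsEquiv.of_braidEquiv hy).trans (AbsEquiv.symm ⟨s, hv⟩)

theorem mem_pairOrbit_a₀_b₀ : ∀ c ∈ involutions,
    c ∈ pairOrbit (codes [a₀, b₀]) (encode (swap 0 5 * swap 1 4)) ∨
      ConjOrbitProper (c :: codes [a₀, b₀]) c := by
  decide +kernel

/-- From `x, x`, the pair `a₀, a₀, b, b` reaches some `y, y` conjugate to `b₀, b₀` by the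
centralizer of `a₀`. -/
def ReachesB₀ (b x : ℕ) : Prop :=
  ∃ y ∈ pairOrbit [encode a₀, b] x, y ∈ conjOrbit (codes centralizerGens) (encode b₀)

instance (b x : ℕ) : Decidable (ReachesB₀ b x) := inferInstanceAs (Decidable (∃ _ ∈ _, _))

theorem reachesB₀_of_mem_pairReps : ∀ b ∈ codes pairReps, ∀ x ∈ involutions,
    ReachesB₀ b x ∨ ConjOrbitProper [x, encode a₀, b] x := by
  decide +kernel

theorem absEquiv_repB_of_a₀_b₀ {y : Perm (Fin 6)}
    (hN : IsNielsen [y, y, a₀, a₀, b₀, b₀]) : AbsEquiv repB [y, y, a₀, a₀, b₀, b₀] :=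
  .of_braidEquiv (hN.pair_braidEquiv (v := [a₀, b₀]) (by simp)
    (isInvolution_repB _ mem_cons_self) mem_pairOrbit_a₀_b₀)

theorem absEquiv_repB_of_b₀_a₀ {y : Perm (Fin 6)}
    (hN : IsNielsen [b₀, b₀, a₀, a₀, y, y]) : AbsEquiv repB [b₀, b₀, a₀, a₀, y, y] := by
  have mul_self (g) (hg : g ∈ [b₀, b₀, a₀, a₀, y, y]) : g * g = 1 := (hN.isInvolution g hg).mul_self
  have h : BraidEquiv [b₀, b₀, a₀, a₀, y, y] [y, y, a₀, a₀, b₀, b₀] := calc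
    BraidEquiv _ [y, y, b₀, b₀, a₀, a₀] := .pair_front (mul_self y (by simp)) [b₀, b₀, a₀, a₀] []
    BraidEquiv _ [y, y, a₀, a₀, b₀, b₀] :=
      (BraidEquiv.pair_front (mul_self a₀ (by simp)) [b₀, b₀] []).append_left [y, y]
  exact (absEquiv_repB_of_a₀_b₀ (hN.of_braidEquiv h)).trans (.symm (.of_braidEquiv h))

theorem absEquiv_repB_of_two_pairs {x b c : Perm (Fin 6)} (hN : IsNielsen [x, x, b, b, c, c]) :
    AbsEquiv repB [x, x, b, b, c, c] := by
  obtain ⟨s, hsb, hsc⟩ :=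
    exists_conj_pair (hN.isInvolution b (by simp)) (hN.isInvolution c (by simp))
  obtain ⟨x', c', hN', hc', h⟩ : ∃ x' c', IsNielsen [x', x', a₀, a₀, c', c'] ∧ c' ∈ pairReps ∧
      AbsEquiv [x, x, b, b, c, c] [x', x', a₀, a₀, c', c'] :=
    ⟨MulAut.conj s x, MulAut.conj s c, hsb ▸ hN.map_conj s, hsc, hsb ▸ .map_conj _ s⟩
  have hx' := hN'.isInvolution x' (by simp)
  refine .trans ?_ h.symm
  rcases reachesB₀_of_mem_pairReps _ (mem_map_of_mem hc') _ (encode_mem_involutions.2 hx') with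
    ⟨_, hy, hyb⟩ | hproper
  · obtain ⟨y, -, rfl, hxy⟩ := exists_pair_of_mem_pairOrbit (v := [a₀, c'])
      (w := [a₀, a₀, c', c']) (fun p hp => hN'.isInvolution p (by aesop)) (by simp) hx' hy
    obtain ⟨t, hta, hty⟩ := exists_conj_of_mem_conjOrbit_centralizerGens hyb
    have hN'' := (hN'.of_braidEquiv hxy).map_conj t
    simp only [map_cons, map_nil, hta, hty] at hN''
    have hconj := AbsEquiv.map_conj [y, y, a₀, a₀, c', c'] t
    simp only [map_cons, map_nil, hta, hty] at hconj
    calc AbsEquiv repB _ := absEquiv_repB_of_b₀_a₀ hN''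
      AbsEquiv _ _ := hconj.symm
      AbsEquiv _ _ := .symm (.of_braidEquiv hxy)
  · exact absurd hproper (hN'.not_conjOrbitProper (v := [x', a₀, c']) (by simp) (by simp))

theorem IsNielsen.absEquiv_repA_or_repB {l : List (Perm (Fin 6))} (hl : IsNielsen l)
    (hlen : l.length = 6) : AbsEquiv repA l ∨ AbsEquiv repB l := by
  obtain ⟨x, v, hlv⟩ := hl.hasPair hlen
  have hN := hl.of_braidEquiv hlv
  have hx := hN.isInvolution x (by simp)
  have hv_len : v.length = 4 := by simpa [hlen] using hlv.length_eq.symm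
  have hv_prod : v.prod = 1 := by simpa [← mul_assoc, hx.mul_self] using hN.prod_eq
  have hback : AbsEquiv (x :: x :: v) l := .symm (.of_braidEquiv hlv)
  rcases exists_two_pairs_or_absEquiv_tailA (fun y hy => hN.isInvolution y (by simp [hy]))
    hv_len hv_prod with ⟨b, c, hv⟩ | hv
  · have hxv : BraidEquiv (x :: x :: v) [x, x, b, b, c, c] := hv.append_left [x, x]
    exact .inr (((absEquiv_repB_of_two_pairs (hN.of_braidEquiv hxv)).trans
      (.symm (.of_braidEquiv hxv))).trans hback)
  · exact .inl ((absEquiv_repA_of_tailA hN hv).trans hback)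

end Representatives

section LiftingInvariant

/-- `1` if `x, y` are adjacent in the wheel with hub `5` and rim `0, 1, 2, 3, 4`, and `-1` if they
are distinct and not adjacent. -/
def wheelSign (x y : Fin 6) : ZMod 3 :=
  if x = y then 0
  else if x = 5 ∨ y = 5 ∨ ((x : ZMod 5) - (y : ZMod 5)) ^ 2 = 1 then 1 else -1

/-- The two-graph of the wheel: the sign of a triple of distinct points. It is invariant under
`PSL(2, 5)`. -/
def triangleSign (x y z : Fin 6) : ZMod 3 := wheelSign x y * wheelSign y z * wheelSign z x

/-- The sum of the signs of the two triangles formed by `p` and the two fixed points of `g`. -/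
def potential (g : Perm (Fin 6)) (p : Fin 6) : ZMod 3 :=
  ∑ e ∈ g.supportᶜ.offDiag, triangleSign p e.1 e.2

/-- The permutation of the 18 points `(p, t)` over `g`, conjugate to `g × 1` by a shear. On
involutions this is the section of `3.A₆ → A₆` into the elements of order two. -/
def involutionLift (g : Perm (Fin 6)) : Perm (Fin 6 × ZMod 3) :=
  prodShear g fun p => Equiv.addRight (potential g (g p) - potential g p)

theorem involutionLift_apply (g : Perm (Fin 6)) (p : Fin 6) (t : ZMod 3) :
    involutionLift g (p, t) = (g p, t + (potential g (g p) - potential g p)) := rfl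

theorem involutionLift_mul_self {g : Perm (Fin 6)} (hg : g * g = 1) :
    involutionLift g * involutionLift g = 1 := by
  ext ⟨p, t⟩ : 1
  have hgp : g (g p) = p := by rw [← Perm.mul_apply, hg, Perm.one_apply]
  simp [involutionLift_apply, hgp, add_assoc]

/-- `X` acts on the lifts of involutions as `s` acts on the involutions. -/
def IsLift (s : Perm (Fin 6)) (X : Perm (Fin 6 × ZMod 3)) : Prop :=
  ∀ a, IsInvolution a → involutionLift (MulAut.conj s a) = MulAut.conj X (involutionLift a)

theorem IsLift.mul {s t : Perm (Fin 6)} {X Y : Perm (Fin 6 × ZMod 3)} (hs : IsLift s X)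
    (ht : IsLift t Y) : IsLift (s * t) (X * Y) := fun a ha => by
  rw [map_mul, map_mul, MulAut.mul_apply, MulAut.mul_apply,
    hs _ ((IsInvolution.conj_iff t).2 ha), ht a ha]

/-- A lift of the transposition of `x` and `y`; it inverts the centre of `3.A₆`. -/
def swapLift (x y : Fin 6) : Perm (Fin 6 × ZMod 3) :=
  prodShear (swap x y) fun p => (Equiv.neg _).trans (Equiv.addRight (triangleSign p x y))

theorem swapLift_apply (x y p : Fin 6) (t : ZMod 3) :
    swapLift x y (p, t) = (swap x y p, -t + triangleSign p x y) := rfl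

theorem triangleSign_swap_add (i : Fin 5) :
    let s := swap i.castSucc i.succ
    ∀ e f, e ≠ f → ∀ p, p ≠ e → p ≠ f → ∀ q, q ≠ e → q ≠ f →
      triangleSign (s p) (s e) (s f) + triangleSign p e f + triangleSign p i.castSucc i.succ =
        triangleSign (s q) (s e) (s f) + triangleSign q e f + triangleSign q i.castSucc i.succ := by
  revert i
  decide +kernel

theorem potential_conj (s g : Perm (Fin 6)) (p : Fin 6) :
    potential (MulAut.conj s g) (s p) =
      ∑ e ∈ g.supportᶜ.offDiag, triangleSign (s p) (s e.1) (s e.2) := by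
  refine (Finset.sum_equiv (s.prodCongr s) (fun e => ?_) fun e _ => rfl).symm
  simp [Finset.mem_offDiag]

theorem potential_conj_add_potential_sub {g : Perm (Fin 6)} (hg : IsInvolution g)
    (s : Perm (Fin 6)) (p : Fin 6) (c : ZMod 3) :
    potential (MulAut.conj s g) (s p) + potential g p - c = ∑ e ∈ g.supportᶜ.offDiag,
      (triangleSign (s p) (s e.1) (s e.2) + triangleSign p e.1 e.2 + c) := by
  have card_fixed : (g.supportᶜ.offDiag.card : ZMod 3) = 2 := by
    have : g.support.card = 4 := by
      rw [← g.sum_cycleType, isInvolution_iff_cycleType.1 hg]; rfl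
    simp [Finset.offDiag_card, Finset.card_compl, this]
  rw [potential_conj, Finset.sum_add_distrib, Finset.sum_add_distrib, Finset.sum_const,
    nsmul_eq_mul, card_fixed, potential, sub_eq_add_neg]
  congr 1
  exact (by decide : ∀ c : ZMod 3, -c = 2 * c) c

theorem isLift_swapLift (i : Fin 5) :
    IsLift (swap i.castSucc i.succ) (swapLift i.castSucc i.succ) := by
  intro g hg
  set x := i.castSucc
  set y := i.succ
  have potential_eq (p) : potential (MulAut.conj (swap x y) g) (swap x y (g p)) +
      potential g (g p) - triangleSign (g p) x y =
        potential (MulAut.conj (swap x y) g) (swap x y p) + potential g p - triangleSign p x y := by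
    by_cases hp : g p = p
    · rw [hp]
    rw [potential_conj_add_potential_sub hg, potential_conj_add_potential_sub hg]
    refine Finset.sum_congr rfl fun e he => ?_
    simp only [Finset.mem_offDiag, Finset.mem_compl, Perm.notMem_support] at he
    have ne_of_fixed {z} (hz : g z = z) : p ≠ z ∧ g p ≠ z := by
      refine ⟨fun h => hp (h ▸ hz), fun h => hp ?_⟩
      rw [← g.injective (h.trans hz.symm)] at hz
      exact hz
    exact triangleSign_swap_add i e.1 e.2 he.2.2 _ (ne_of_fixed he.1).2 (ne_of_fixed he.2.1).2
      _ (ne_of_fixed he.1).1 (ne_of_fixed he.2.1).1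
  rw [MulAut.conj_apply (swapLift x y), eq_mul_inv_iff_mul_eq]
  ext ⟨p, t⟩ : 1
  have conj_apply : MulAut.conj (swap x y) g (swap x y p) = swap x y (g p) := by simp
  simp only [Perm.mul_apply, swapLift_apply, involutionLift_apply, conj_apply, Prod.mk.injEq,
    true_and]
  linear_combination potential_eq p

theorem exists_isLift (s : Perm (Fin 6)) : ∃ X, IsLift s X := by
  refine adjacentSwaps_induction (P := fun s => ∃ X, IsLift s X) ⟨1, fun a _ => by simp⟩ ?_ ?_ s
  · rintro s t ⟨X, hX⟩ ⟨Y, hY⟩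
    exact ⟨X * Y, hX.mul hY⟩
  · intro s hs
    obtain ⟨i, rfl⟩ := mem_ofFn.1 hs
    exact ⟨_, isLift_swapLift i⟩

theorem isLift_a₀ : IsLift a₀ (involutionLift a₀) := by
  have h : involutionLift a₀ = swapLift 0 1 * swapLift 2 3 := by
    decide +kernel
  rw [h]
  exact (isLift_swapLift 0).mul (isLift_swapLift 2)

theorem IsInvolution.isLift {a : Perm (Fin 6)} (ha : IsInvolution a) :
    IsLift a (involutionLift a) := by
  obtain ⟨s, -, rfl⟩ := isInvolution_a₀.exists_conj_eq ha
  obtain ⟨X, hX⟩ := exists_isLift s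
  intro b hb
  obtain ⟨c, rfl⟩ := (MulAut.conj s).surjective b
  rw [IsInvolution.conj_iff] at hb
  have conj_conj {G : Type} [Group G] (g h k : G) :
      MulAut.conj (MulAut.conj g h) (MulAut.conj g k) = MulAut.conj g (MulAut.conj h k) := by
    simp [mul_assoc]
  rw [conj_conj, hX _ ((IsInvolution.conj_iff a₀).2 hb), isLift_a₀ c hb, hX _ isInvolution_a₀,
    hX _ hb, conj_conj]

theorem BraidEquiv.prod_map_involutionLift_eq {l m : List (Perm (Fin 6))} (h : BraidEquiv l m)
    (hl : ∀ x ∈ l, IsInvolution x) : (l.map involutionLift).prod = (m.map involutionLift).prod := by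
  refine ((iff_of_step (P := fun n => (∀ x ∈ n, IsInvolution x) ∧
    (l.map involutionLift).prod = (n.map involutionLift).prod) ?_ h).1 ⟨hl, rfl⟩).2
  rintro _ _ ⟨u, a, b, v⟩
  have hinv := forall_mem_iff (P := IsInvolution) (fun _ _ => IsInvolution.inv_mul_mul_iff)
    (swap u a b v)
  rw [← hinv]
  refine and_congr_right fun hn => ?_
  have ha := hn a (by simp)
  have hb := hn b (by simp)
  have involutionLift_swap :
      involutionLift b * involutionLift (b⁻¹ * a * b) = involutionLift a * involutionLift b := by
    have h := hb.isLift a ha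
    rw [MulAut.conj_apply, MulAut.conj_apply, hb.inv_eq,
      inv_eq_of_mul_eq_one_left (involutionLift_mul_self hb.mul_self)] at h
    rw [hb.inv_eq, h, ← mul_assoc, ← mul_assoc, involutionLift_mul_self hb.mul_self, one_mul]
  simp only [map_append, map_cons, prod_append, prod_cons,
    ← mul_assoc _ (involutionLift _) (prod _), involutionLift_swap]

theorem AbsEquiv.prod_map_involutionLift_eq_one {l m : List (Perm (Fin 6))} (h : AbsEquiv l m)
    (hl : ∀ x ∈ l, IsInvolution x) (hprod : (l.map involutionLift).prod = 1) :
    (m.map involutionLift).prod = 1 := by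
  obtain ⟨s, hs⟩ := h
  obtain ⟨X, hX⟩ := exists_isLift s
  have map_involutionLift_conj :
      (l.map (MulAut.conj s)).map involutionLift = (l.map involutionLift).map (MulAut.conj X) := by
    simp only [map_map]
    exact map_congr_left fun x hx => hX x (hl x hx)
  rw [← hs.prod_map_involutionLift_eq
    (forall_mem_map.2 fun x hx => (IsInvolution.conj_iff s).2 (hl x hx)), map_involutionLift_conj,
    ← map_list_prod, hprod, map_one]

theorem prod_map_involutionLift_repB : (repB.map involutionLift).prod = 1 := by
  have mul_self (g) (hg : g ∈ repB) : involutionLift g * involutionLift g = 1 :=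
    involutionLift_mul_self (isInvolution_repB g hg).mul_self
  simp only [repB, map_cons, map_nil, prod_cons, prod_nil, mul_one, ← mul_assoc]
  rw [mul_self _ (by simp [repB]), one_mul, mul_self a₀ (by simp [repB]), one_mul,
    mul_self b₀ (by simp [repB])]

theorem prod_map_involutionLift_repA : (repA.map involutionLift).prod ≠ 1 := by
  intro h
  have : (repA.map involutionLift).prod (0, 0) = (0, 0) := by rw [h, Perm.one_apply]
  revert this
  decide +kernel

theorem not_absEquiv_repA_repB : ¬ AbsEquiv repA repB := fun h =>
  prod_map_involutionLift_repA (h.symm.prod_map_involutionLift_eq_one isInvolution_repB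
    prod_map_involutionLift_repB)

end LiftingInvariant

theorem isNielsen_repA : IsNielsen repA where
  isInvolution := isInvolution_repA
  prod_eq := by decide +kernel
  closure_eq := closure_eq_alternatingGroup isInvolution_repA mem_cons_self (by decide +kernel)

theorem isNielsen_repB : IsNielsen repB where
  isInvolution := isInvolution_repB
  prod_eq := by decide +kernel
  closure_eq := closure_eq_alternatingGroup isInvolution_repB mem_cons_self (by decide +kernel)

end HurwitzA6

open HurwitzA6

/-- The quotient of `Ni(A₆, C_{2×2}^6)` by the equivalence relation generated
by Hurwitz moves and simultaneous `S₆`-conjugation has exactly two classes. -/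
theorem stmt_17 :
    Nat.card (Quotient ((Relation.EqvGen.setoid (AbsRel 6)).comap
      (Subtype.val : ↥(NielsenSet 6) → (Fin 6 → Equiv.Perm (Fin 6))))) = 2 := by
  obtain ⟨a, ha⟩ : ∃ a : Fin 6 → Equiv.Perm (Fin 6), List.ofFn a = repA := ⟨_, List.ofFn_get repA⟩
  obtain ⟨b, hb⟩ : ∃ b : Fin 6 → Equiv.Perm (Fin 6), List.ofFn b = repB := ⟨_, List.ofFn_get repB⟩
  have ha_mem : a ∈ NielsenSet 6 := IsNielsen.ofFn_iff.1 (ha ▸ isNielsen_repA)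
  have hb_mem : b ∈ NielsenSet 6 := IsNielsen.ofFn_iff.1 (hb ▸ isNielsen_repB)
  refine Nat.card_eq_two_iff.2 ⟨⟦⟨a, ha_mem⟩⟧, ⟦⟨b, hb_mem⟩⟧, fun h => ?_,
    Set.eq_univ_of_forall fun q => ?_⟩
  · have hab : AbsEquiv (List.ofFn a) (List.ofFn b) := eqvGen_absRel_iff.1 (Quotient.exact h)
    exact not_absEquiv_repA_repB (ha ▸ hb ▸ hab)
  · obtain ⟨⟨g, hg⟩, rfl⟩ := Quotient.exists_rep q
    refine ((IsNielsen.ofFn_iff.2 hg).absEquiv_repA_or_repB List.length_ofFn).imp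
      (fun h => ?_) fun h => ?_
    · exact Quotient.sound (eqvGen_absRel_iff.2 (ha ▸ h.symm))
    · exact Quotient.sound (eqvGen_absRel_iff.2 (hb ▸ h.symm))
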